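/- arXiv:0707.0646 — 3 statements merged into one kernel-verified Lean document; each statement's English description precedes it below -/
import Mathlib

section
/- The function Ψ₆(τ) = P₀(τ)³ − 9P₀(τ)(P₁(τ)² + P₂(τ)² + P₃(τ)² − 4P₄(τ)²) + 54P₁(τ)P₂(τ)P₃(τ) is a Siegel modular form of weight 6 for Sp(4,ℤ): for every matrix M = (A B; C D) ∈ Sp(4,ℤ) (written in 2×2 blocks) and every τ ∈ H₂, the matrix Cτ+D is invertible, (Aτ+B)(Cτ+D)⁻¹ ∈ H₂, and Ψ₆((Aτ+B)(Cτ+D)⁻¹) = det(Cτ+D)⁶ · Ψ₆(τ). -/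
open scoped BigOperators

namespace TwoLoop

/-- 2×2 complex matrices. -/
abbrev Mat2 := Matrix (Fin 2) (Fin 2) ℂ

/-- The genus-2 Siegel upper half space: symmetric 2×2 complex matrices with
positive definite imaginary part. -/
def SiegelH2 : Set Mat2 := {τ | τ.transpose = τ ∧ (τ.map Complex.im).PosDef}

/-- A (half-integer) theta characteristic `[a;b]`, recorded by its rows `a, b ∈ {0,1}²`. -/
abbrev Char := (Fin 2 → ℤ) × (Fin 2 → ℤ)

/-- The theta constant `θ[a;b](τ) = Σ_{n ∈ ℤ²} exp(πi (n+a/2)ᵀ τ (n+a/2) + πi (n+a/2)·b)`. -/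
noncomputable def theta (κ : Char) (τ : Mat2) : ℂ :=
  ∑' n : Fin 2 → ℤ,
    Complex.exp ((Real.pi : ℂ) * Complex.I *
      ((∑ i, ∑ j, ((n i : ℂ) + (κ.1 i : ℂ) / 2) * τ i j * ((n j : ℂ) + (κ.1 j : ℂ) / 2))
        + ∑ i, ((n i : ℂ) + (κ.1 i : ℂ) / 2) * (κ.2 i : ℂ)))

/-- The ten even characteristics δ₁,…,δ₁₀. -/
def δev : Fin 10 → Char :=
  ![(![0,0], ![0,0]), (![0,0], ![0,1]), (![0,0], ![1,0]), (![0,0], ![1,1]),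
    (![0,1], ![0,0]), (![0,1], ![1,0]), (![1,0], ![0,0]), (![1,0], ![0,1]),
    (![1,1], ![0,0]), (![1,1], ![1,1])]

/-- The six odd characteristics ν₁,…,ν₆. -/
def νodd : Fin 6 → Char :=
  ![(![0,1], ![0,1]), (![1,0], ![1,0]), (![0,1], ![1,1]),
    (![1,0], ![1,1]), (![1,1], ![0,1]), (![1,1], ![1,0])]

/-- `Θ[ε](τ) = θ[ε;0](2τ)`. -/
noncomputable def Θf (ε : Fin 2 → ℤ) (τ : Mat2) : ℂ := theta (ε, ![0,0]) ((2 : ℂ) • τ)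

noncomputable def P0 (τ : Mat2) : ℂ :=
  Θf ![0,0] τ ^ 4 + Θf ![0,1] τ ^ 4 + Θf ![1,0] τ ^ 4 + Θf ![1,1] τ ^ 4
noncomputable def P1 (τ : Mat2) : ℂ :=
  2 * (Θf ![0,0] τ ^ 2 * Θf ![0,1] τ ^ 2 + Θf ![1,0] τ ^ 2 * Θf ![1,1] τ ^ 2)
noncomputable def P2 (τ : Mat2) : ℂ :=
  2 * (Θf ![0,0] τ ^ 2 * Θf ![1,0] τ ^ 2 + Θf ![0,1] τ ^ 2 * Θf ![1,1] τ ^ 2)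
noncomputable def P3 (τ : Mat2) : ℂ :=
  2 * (Θf ![0,0] τ ^ 2 * Θf ![1,1] τ ^ 2 + Θf ![0,1] τ ^ 2 * Θf ![1,0] τ ^ 2)
noncomputable def P4 (τ : Mat2) : ℂ :=
  4 * (Θf ![0,0] τ * Θf ![0,1] τ * Θf ![1,0] τ * Θf ![1,1] τ)

/-- The vector `(P₀,…,P₄)`. -/
noncomputable def Pv : Fin 5 → Mat2 → ℂ := ![P0, P1, P2, P3, P4]

open MvPolynomial in
/-- The Igusa quartic as a polynomial in `x₀,…,x₄`. -/
noncomputable def I4poly : MvPolynomial (Fin 5) ℂ :=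
  X 4 ^ 4 + X 4 ^ 2 * X 0 ^ 2 - X 4 ^ 2 * X 1 ^ 2 - X 4 ^ 2 * X 2 ^ 2 - X 4 ^ 2 * X 3 ^ 2
    + X 1 ^ 2 * X 2 ^ 2 + X 1 ^ 2 * X 3 ^ 2 + X 2 ^ 2 * X 3 ^ 2
    - 2 * (X 0 * X 1 * X 2 * X 3)

/-- The signature `⟨κ|λ⟩ = exp(πi(a_κ·b_λ − b_κ·a_λ))`. -/
noncomputable def sig (κ lam : Char) : ℂ :=
  Complex.exp ((Real.pi : ℂ) * Complex.I *
    (((∑ i, κ.1 i * lam.2 i : ℤ) : ℂ) - ((∑ i, κ.2 i * lam.1 i : ℤ) : ℂ)))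

/-- Componentwise mod-2 sum of characteristics. -/
def addChar (κ lam : Char) : Char :=
  (fun i => (κ.1 i + lam.1 i) % 2, fun i => (κ.2 i + lam.2 i) % 2)

/-- For each even characteristic `δ_d`, the ordering `(k₁,…,k₆)` of `{1,…,6}` (0-indexed) whose
first three entries form the triad of odd characteristics with `δ_d = ν_{k₁}+ν_{k₂}+ν_{k₃}`
and whose last three are the complementary indices. -/
def triad : Fin 10 → Fin 6 → Fin 6 :=
  ![![0,3,5,1,2,4], ![0,1,5,2,3,4], ![0,1,4,2,3,5], ![0,3,4,1,2,5], ![0,1,3,2,4,5],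
    ![0,4,5,1,2,3], ![0,1,2,3,4,5], ![0,2,3,1,4,5], ![0,2,5,1,3,4], ![0,2,4,1,3,5]]

/-- D'Hoker–Phong's `Ξ₆[δ]`. -/
noncomputable def Xi6 (d : Fin 10) (τ : Mat2) : ℂ :=
  ∑ i : Fin 3, ∑ j : Fin 3,
    if i < j then
      sig (νodd (triad d (Fin.castLE (by norm_num) i))) (νodd (triad d (Fin.castLE (by norm_num) j))) *
        ∏ m : Fin 3,
          theta (addChar (addChar (νodd (triad d (Fin.castLE (by norm_num) i)))
              (νodd (triad d (Fin.castLE (by norm_num) j))))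
            (νodd (triad d (⟨m.1 + 3, by omega⟩ : Fin 6)))) τ ^ 4
    else 0

/-- The formal derivative `∂I₄/∂θ⁴[δ]` of the Igusa quartic with respect to the ten fourth
powers of the even theta constants, regarded as independent variables. -/
noncomputable def Dd (d : Fin 10) (τ : Mat2) : ℂ :=
  (1 / 48 : ℂ) *
    (theta (δev d) τ ^ 4 * (∑ d' : Fin 10, theta (δev d') τ ^ 8) - 4 * theta (δev d) τ ^ 12)

/-- `f_δ = 2Ξ₆[δ] − ∂I₄/∂θ⁴[δ]`. -/
noncomputable def fδ (d : Fin 10) (τ : Mat2) : ℂ := 2 * Xi6 d τ - Dd d τ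

/-- `Ψ₆`, the weight-6 modular form. -/
noncomputable def Ψ6 (τ : Mat2) : ℂ :=
  P0 τ ^ 3 - 9 * P0 τ * (P1 τ ^ 2 + P2 τ ^ 2 + P3 τ ^ 2 - 4 * P4 τ ^ 2)
    + 54 * (P1 τ * P2 τ * P3 τ)

/-- `Ψ₁₀`, the weight-10 modular form. -/
noncomputable def Ψ10 (τ : Mat2) : ℂ := ∏ d : Fin 10, theta (δev d) τ ^ 2

/-- A characteristic is even when `a·b` is even. -/
def IsEvenChar (κ : Char) : Prop := (∑ i, κ.1 i * κ.2 i) % 2 = 0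

/-- A characteristic is odd when `a·b` is odd. -/
def IsOddChar (κ : Char) : Prop := (∑ i, κ.1 i * κ.2 i) % 2 = 1

/-- The symplectic form `J = (0 I; −I 0)`. -/
def Jmat : Matrix (Fin 4) (Fin 4) ℤ := !![0,0,1,0; 0,0,0,1; -1,0,0,0; 0,-1,0,0]

/-- The symplectic group `Sp(4,ℤ)`. -/
def Sp4Z : Set (Matrix (Fin 4) (Fin 4) ℤ) := {M | M.transpose * Jmat * M = Jmat}

/-- Upper-left 2×2 block `A` of a 4×4 integer matrix, as a complex matrix. -/
def blkA (M : Matrix (Fin 4) (Fin 4) ℤ) : Mat2 :=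
  fun i j => ((M (⟨i.1, by omega⟩ : Fin 4) (⟨j.1, by omega⟩ : Fin 4) : ℤ) : ℂ)

/-- Upper-right 2×2 block `B`. -/
def blkB (M : Matrix (Fin 4) (Fin 4) ℤ) : Mat2 :=
  fun i j => ((M (⟨i.1, by omega⟩ : Fin 4) (⟨j.1 + 2, by omega⟩ : Fin 4) : ℤ) : ℂ)

/-- Lower-left 2×2 block `C`. -/
def blkC (M : Matrix (Fin 4) (Fin 4) ℤ) : Mat2 :=
  fun i j => ((M (⟨i.1 + 2, by omega⟩ : Fin 4) (⟨j.1, by omega⟩ : Fin 4) : ℤ) : ℂ)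

/-- Lower-right 2×2 block `D`. -/
def blkD (M : Matrix (Fin 4) (Fin 4) ℤ) : Mat2 :=
  fun i j => ((M (⟨i.1 + 2, by omega⟩ : Fin 4) (⟨j.1 + 2, by omega⟩ : Fin 4) : ℤ) : ℂ)

/-! ### Generation of the integral symplectic group -/

/-- The translation matrix with upper right block `(s t; t u)`. -/
def Tm (s t u : ℤ) : Matrix (Fin 4) (Fin 4) ℤ := !![1,0,s,t; 0,1,t,u; 0,0,1,0; 0,0,0,1]

/-- The partial inversion in the first coordinate. -/
def J1m : Matrix (Fin 4) (Fin 4) ℤ := !![0,0,-1,0; 0,1,0,0; 1,0,0,0; 0,0,0,1]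

/-- The swap of the two coordinates. -/
def Pm : Matrix (Fin 4) (Fin 4) ℤ := !![0,1,0,0; 1,0,0,0; 0,0,0,1; 0,0,1,0]

def gens : Set (Matrix (Fin 4) (Fin 4) ℤ) := {M | M = J1m ∨ M = Pm ∨ ∃ s t u, M = Tm s t u}

def K : Submonoid (Matrix (Fin 4) (Fin 4) ℤ) := Submonoid.closure gens

lemma Tm_mem (s t u : ℤ) : Tm s t u ∈ K := Submonoid.subset_closure (Or.inr (Or.inr ⟨s, t, u, rfl⟩))
lemma J1m_mem : J1m ∈ K := Submonoid.subset_closure (Or.inl rfl)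
lemma Pm_mem : Pm ∈ K := Submonoid.subset_closure (Or.inr (Or.inl rfl))

abbrev SL2 := Matrix.SpecialLinearGroup (Fin 2) ℤ

def E1 (g : SL2) : Matrix (Fin 4) (Fin 4) ℤ :=
  !![g.1 0 0, 0, g.1 0 1, 0; 0,1,0,0; g.1 1 0, 0, g.1 1 1, 0; 0,0,0,1]

def E2 (g : SL2) : Matrix (Fin 4) (Fin 4) ℤ :=
  !![1,0,0,0; 0, g.1 0 0, 0, g.1 0 1; 0,0,1,0; 0, g.1 1 0, 0, g.1 1 1]

def Lm (g : SL2) : Matrix (Fin 4) (Fin 4) ℤ :=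
  !![g.1 0 0, g.1 0 1, 0, 0; g.1 1 0, g.1 1 1, 0, 0;
     0, 0, g.1 1 1, -g.1 1 0; 0, 0, -g.1 0 1, g.1 0 0]

lemma SL2_ind (E : SL2 → Matrix (Fin 4) (Fin 4) ℤ) (h1 : E 1 = 1)
    (hmul : ∀ g h, E (g * h) = E g * E h)
    (hS : E ModularGroup.S ∈ K) (hS' : E ModularGroup.S⁻¹ ∈ K)
    (hT : E ModularGroup.T ∈ K) (hT' : E ModularGroup.T⁻¹ ∈ K) (g : SL2) : E g ∈ K := by
  have hg : g ∈ Subgroup.closure {ModularGroup.S, ModularGroup.T} := by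
    rw [SpecialLinearGroup.SL2Z_generators]; trivial
  suffices E g ∈ K ∧ E g⁻¹ ∈ K from this.1
  induction hg using Subgroup.closure_induction with
  | mem x hx =>
    rcases hx with rfl | hx
    · exact ⟨hS, hS'⟩
    · rw [Set.mem_singleton_iff] at hx
      subst hx
      exact ⟨hT, hT'⟩
  | one => simp [h1, K.one_mem]
  | mul x y _ _ hx hy =>
    rw [mul_inv_rev, hmul, hmul]
    exact ⟨K.mul_mem hx.1 hy.1, K.mul_mem hy.2 hx.2⟩
  | inv x _ hx => rw [inv_inv]; exact ⟨hx.2, hx.1⟩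

lemma E1_one : E1 1 = 1 := by decide
lemma E2_one : E2 1 = 1 := by decide
lemma Lm_one : Lm 1 = 1 := by decide

lemma E1_mul (g h : SL2) : E1 (g * h) = E1 g * E1 h := by
  ext i j
  fin_cases i <;> fin_cases j <;>
    simp [E1, Matrix.mul_apply, Fin.sum_univ_four, Fin.sum_univ_two]

lemma E2_mul (g h : SL2) : E2 (g * h) = E2 g * E2 h := by
  ext i j
  fin_cases i <;> fin_cases j <;>
    simp [E2, Matrix.mul_apply, Fin.sum_univ_four, Fin.sum_univ_two]

lemma Lm_mul (g h : SL2) : Lm (g * h) = Lm g * Lm h := by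
  ext i j
  fin_cases i <;> fin_cases j <;>
    simp [Lm, Matrix.mul_apply, Fin.sum_univ_four, Fin.sum_univ_two] <;> ring

lemma E1_mem (g : SL2) : E1 g ∈ K := by
  apply SL2_ind E1 E1_one E1_mul
  · have : E1 ModularGroup.S = J1m := by decide
    rw [this]
    exact J1m_mem
  · have : E1 ModularGroup.S⁻¹ = J1m * J1m * J1m := by decide
    rw [this]
    exact K.mul_mem (K.mul_mem J1m_mem J1m_mem) J1m_mem
  · have : E1 ModularGroup.T = Tm 1 0 0 := by decide
    rw [this]
    exact Tm_mem _ _ _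
  · have : E1 ModularGroup.T⁻¹ = Tm (-1) 0 0 := by decide
    rw [this]
    exact Tm_mem _ _ _

lemma E2_eq (g : SL2) : E2 g = Pm * E1 g * Pm := by
  ext i j
  fin_cases i <;> fin_cases j <;>
    simp [E1, E2, Pm, Matrix.mul_apply, Fin.sum_univ_four]

lemma E2_mem (g : SL2) : E2 g ∈ K := by
  rw [E2_eq]; exact K.mul_mem (K.mul_mem Pm_mem (E1_mem g)) Pm_mem

def Jm : Matrix (Fin 4) (Fin 4) ℤ := J1m * (Pm * J1m * Pm)

lemma Jm_mem : Jm ∈ K := K.mul_mem J1m_mem (K.mul_mem (K.mul_mem Pm_mem J1m_mem) Pm_mem)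

lemma word_mem (s t u s' t' u' : ℤ) :
    Tm s t u * Jm * Tm s' t' u' * Jm * Tm s t u * Jm ∈ K :=
  K.mul_mem (K.mul_mem (K.mul_mem (K.mul_mem (K.mul_mem (Tm_mem _ _ _) Jm_mem) (Tm_mem _ _ _))
    Jm_mem) (Tm_mem _ _ _)) Jm_mem

lemma Lm_mem (g : SL2) : Lm g ∈ K := by
  apply SL2_ind Lm Lm_one Lm_mul
  · have : Lm ModularGroup.S = E1 (-1) * Pm := by decide
    rw [this]
    exact K.mul_mem (E1_mem _) Pm_mem
  · have : Lm ModularGroup.S⁻¹ = Pm * E1 (-1) := by decide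
    rw [this]
    exact K.mul_mem Pm_mem (E1_mem _)
  · have : Lm ModularGroup.T = Jm * Jm *
        (Tm 1 1 0 * Jm * Tm 0 1 (-1) * Jm * Tm 1 1 0 * Jm) * Pm := by decide
    rw [this]
    exact K.mul_mem (K.mul_mem (K.mul_mem Jm_mem Jm_mem) (word_mem _ _ _ _ _ _)) Pm_mem
  · have : Lm ModularGroup.T⁻¹ = Jm * Jm * Pm *
        (Tm 0 1 (-1) * Jm * Tm 1 1 0 * Jm * Tm 0 1 (-1) * Jm) := by decide
    rw [this]
    exact K.mul_mem (K.mul_mem (K.mul_mem Jm_mem Jm_mem) Pm_mem) (word_mem _ _ _ _ _ _)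

lemma bezout (a c : ℤ) : ∃ g : SL2, g.1 1 0 * a + g.1 1 1 * c = 0 := by
  by_cases h : (Int.gcd a c : ℤ) = 0
  · have : a = 0 ∧ c = 0 := by
      have : Int.gcd a c = 0 := by exact_mod_cast h
      rwa [Int.gcd_eq_zero_iff] at this
    exact ⟨1, by simp [this.1, this.2]⟩
  · obtain ⟨a', ha⟩ := Int.gcd_dvd_left (a := a) (b := c)
    obtain ⟨c', hc⟩ := Int.gcd_dvd_right (a := a) (b := c)
    have hb := Int.gcd_eq_gcd_ab a c
    set d : ℤ := (Int.gcd a c : ℤ)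
    refine ⟨⟨!![Int.gcdA a c, Int.gcdB a c; -c', a'], ?_⟩, ?_⟩
    · rw [Matrix.det_fin_two_of]
      apply mul_left_cancel₀ h
      linear_combination (-Int.gcdA a c) * ha - Int.gcdB a c * hc - hb
    · simp
      generalize Int.gcdA a c = x at *
      generalize Int.gcdB a c = y at *
      clear_value d
      subst ha
      linear_combination a' * hc

lemma Sp4_mul {M N : Matrix (Fin 4) (Fin 4) ℤ} (hM : M ∈ Sp4Z) (hN : N ∈ Sp4Z) :
    M * N ∈ Sp4Z := by
  simp only [Sp4Z, Set.mem_ofPred_eq] at *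
  rw [Matrix.transpose_mul]
  calc _ = N.transpose * (M.transpose * Jmat * M) * N := by simp only [Matrix.mul_assoc]
    _ = _ := by rw [hM, hN]

lemma K_Sp {M : Matrix (Fin 4) (Fin 4) ℤ} (h : M ∈ K) : M ∈ Sp4Z := by
  induction h using Submonoid.closure_induction with
  | mem x hx =>
    rcases hx with rfl | rfl | ⟨s, t, u, rfl⟩
    · simp only [Sp4Z, Set.mem_ofPred_eq]; decide
    · simp only [Sp4Z, Set.mem_ofPred_eq]; decide
    · simp only [Sp4Z, Set.mem_ofPred_eq]
      ext i j
      fin_cases i <;> fin_cases j <;>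
        simp [Tm, Jmat, Matrix.mul_apply, Fin.sum_univ_four]
  | one => simp [Sp4Z]
  | mul x y _ _ hx hy => exact Sp4_mul hx hy

lemma Sp4_entry {M : Matrix (Fin 4) (Fin 4) ℤ} (hM : M ∈ Sp4Z) (i j : Fin 4) :
    M 0 i * M 2 j + M 1 i * M 3 j - M 2 i * M 0 j - M 3 i * M 1 j = Jmat i j := by
  have := congrFun (congrFun hM i) j
  rw [← this]
  simp [Jmat, Matrix.mul_apply, Fin.sum_univ_four]
  ring

/-- Cancelling an element of `K`. -/
lemma K_cancel (E : SL2 → Matrix (Fin 4) (Fin 4) ℤ) (h1 : E 1 = 1)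
    (hmul : ∀ g h, E (g * h) = E g * E h) (hE : ∀ g, E g ∈ K) (g : SL2)
    {M : Matrix (Fin 4) (Fin 4) ℤ} (h : E g * M ∈ K) : M ∈ K := by
  have : M = E g⁻¹ * (E g * M) := by
    rw [← Matrix.mul_assoc, ← hmul, inv_mul_cancel, h1, Matrix.one_mul]
  rw [this]
  exact K.mul_mem (hE _) h

lemma stage3 {M : Matrix (Fin 4) (Fin 4) ℤ} (hM : M ∈ Sp4Z) (h0 : M 0 0 = 1) (h1 : M 1 0 = 0)
    (h2 : M 2 0 = 0) (h3 : M 3 0 = 0) (h11 : M 1 1 = 1) (h13 : M 1 3 = 0) (h31 : M 3 1 = 0)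
    (h33 : M 3 3 = 1) : M ∈ K := by
  have e1 := Sp4_entry hM 0 1
  have e2 := Sp4_entry hM 0 2
  have e3 := Sp4_entry hM 0 3
  have e4 := Sp4_entry hM 1 2
  have e5 := Sp4_entry hM 2 3
  simp [Jmat, h0, h1, h2, h3, h11, h13, h31, h33] at e1 e2 e3 e4 e5
  simp [e1, e2, e3] at e4 e5
  have key : M = Tm (M 0 2 + M 0 3 * M 0 1) (M 0 3) 0 *
      Lm ⟨!![1, M 0 1; 0, 1], by simp⟩ := by
    ext i j
    fin_cases i <;> fin_cases j <;>
      simp [Tm, Lm, Matrix.mul_apply, Fin.sum_univ_four, h0, h1, h2, h3, h11, h13, h31, h33,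
        e1, e2, e3] <;> linarith
  rw [key]
  exact K.mul_mem (Tm_mem _ _ _) (Lm_mem _)

lemma stage2 {M : Matrix (Fin 4) (Fin 4) ℤ} (hM : M ∈ Sp4Z) (h0 : M 0 0 = 1) (h1 : M 1 0 = 0)
    (h2 : M 2 0 = 0) (h3 : M 3 0 = 0) : M ∈ K := by
  have e1 := Sp4_entry hM 0 1
  have e3 := Sp4_entry hM 0 3
  have e4 := Sp4_entry hM 1 3
  simp [Jmat, h0, h1, h2, h3] at e1 e3 e4
  simp [e1, e3] at e4
  have hd : Matrix.det !![M 3 3, -M 1 3; -M 3 1, M 1 1] = 1 := by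
    rw [Matrix.det_fin_two_of]; linarith
  apply K_cancel E2 E2_one E2_mul E2_mem ⟨!![M 3 3, -M 1 3; -M 3 1, M 1 1], hd⟩
  apply stage3 (Sp4_mul (K_Sp (E2_mem _)) hM) <;>
    simp [E2, Matrix.mul_apply, Fin.sum_univ_four, h0, h1, h2, h3] <;> linarith

lemma stage1 {M : Matrix (Fin 4) (Fin 4) ℤ} (hM : M ∈ Sp4Z) (h1 : M 1 0 = 0)
    (h2 : M 2 0 = 0) (h3 : M 3 0 = 0) : M ∈ K := by
  have e := Sp4_entry hM 0 2
  simp [Jmat, h1, h2, h3] at e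
  rcases Int.isUnit_iff.mp (IsUnit.of_mul_eq_one _ e) with h | h
  · exact stage2 hM h h1 h2 h3
  · apply K_cancel E1 E1_one E1_mul E1_mem (-1)
    apply stage2 (Sp4_mul (K_Sp (E1_mem _)) hM) <;>
      simp [E1, Matrix.mul_apply, Fin.sum_univ_four, h, h1, h2, h3]

lemma Sp4_le_K {M : Matrix (Fin 4) (Fin 4) ℤ} (hM : M ∈ Sp4Z) : M ∈ K := by
  obtain ⟨g1, hg1⟩ := bezout (M 0 0) (M 2 0)
  apply K_cancel E1 E1_one E1_mul E1_mem g1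
  have hM1 := Sp4_mul (K_Sp (E1_mem g1)) hM
  have c1 : (E1 g1 * M) 2 0 = 0 := by
    simp [E1, Matrix.mul_apply, Fin.sum_univ_four]; exact hg1
  generalize E1 g1 * M = M1 at *
  obtain ⟨g2, hg2⟩ := bezout (M1 1 0) (M1 3 0)
  apply K_cancel E2 E2_one E2_mul E2_mem g2
  have hM2 := Sp4_mul (K_Sp (E2_mem g2)) hM1
  have c2 : (E2 g2 * M1) 2 0 = 0 := by
    simp [E2, Matrix.mul_apply, Fin.sum_univ_four, c1]
  have c3 : (E2 g2 * M1) 3 0 = 0 := by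
    simp [E2, Matrix.mul_apply, Fin.sum_univ_four]; exact hg2
  generalize E2 g2 * M1 = M2 at *
  obtain ⟨g3, hg3⟩ := bezout (M2 0 0) (M2 1 0)
  apply K_cancel Lm Lm_one Lm_mul Lm_mem g3
  apply stage1 (Sp4_mul (K_Sp (Lm_mem g3)) hM2)
  · simp [Lm, Matrix.mul_apply, Fin.sum_univ_four]; exact hg3
  · simp [Lm, Matrix.mul_apply, Fin.sum_univ_four, c2, c3]
  · simp [Lm, Matrix.mul_apply, Fin.sum_univ_four, c2, c3]

/-! ### Theta constants -/

open Complex in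
/-- The summand of `Θ[e f]`, for the period matrix `(a b; b c)`. -/
noncomputable def gterm (a b c : ℂ) (e f : ℤ) (p : ℤ × ℤ) : ℂ :=
  cexp (2 * (Real.pi : ℂ) * I * (((p.2 : ℂ) + (e : ℂ) / 2) ^ 2 * a
    + 2 * ((p.2 : ℂ) + (e : ℂ) / 2) * ((p.1 : ℂ) + (f : ℂ) / 2) * b
    + ((p.1 : ℂ) + (f : ℂ) / 2) ^ 2 * c))

noncomputable def TH (a b c : ℂ) (e f : ℤ) : ℂ := ∑' p, gterm a b c e f p

lemma Θf_eq (e f : ℤ) (τ : Mat2) (h : τ 1 0 = τ 0 1) :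
    Θf ![e, f] τ = TH (τ 0 0) (τ 0 1) (τ 1 1) e f := by
  unfold Θf theta TH
  rw [← ((finTwoArrowEquiv ℤ).trans (Equiv.prodComm ℤ ℤ)).tsum_eq]
  apply tsum_congr
  intro n
  unfold gterm
  congr 1
  simp [Fin.sum_univ_two, h]
  ring

/-- The domain in coordinates. -/
def Dom (a b c : ℂ) : Prop := 0 < a.im ∧ 0 < c.im ∧ b.im ^ 2 < a.im * c.im

lemma mem_H2_iff (τ : Mat2) : τ ∈ SiegelH2 ↔ τ 1 0 = τ 0 1 ∧ Dom (τ 0 0) (τ 0 1) (τ 1 1) := by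
  constructor
  · rintro ⟨h1, h2⟩
    have hs : τ 1 0 = τ 0 1 := congrFun (congrFun h1 0) 1
    refine ⟨hs, ?_, ?_, ?_⟩
    · simpa using h2.diag_pos (i := 0)
    · simpa using h2.diag_pos (i := 1)
    · have := h2.det_pos
      rw [Matrix.det_fin_two] at this
      simp [hs] at this
      linarith
  · rintro ⟨hs, ha, hc, hd⟩
    refine ⟨?_, ?_⟩
    · ext i j
      fin_cases i <;> fin_cases j <;> simp [hs]
    · refine Matrix.PosDef.of_dotProduct_mulVec_pos ?_ ?_
      · ext i j
        fin_cases i <;> fin_cases j <;> simp [hs]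
      · intro x hx
        simp [dotProduct, Matrix.mulVec, Fin.sum_univ_two, hs]
        by_cases h1 : x 1 = 0
        · have h0 : x 0 ≠ 0 := by
            intro h0
            apply hx
            ext i
            fin_cases i <;> simp [h0, h1]
          rw [h1]
          have : 0 < x 0 ^ 2 := by positivity
          nlinarith
        · have : 0 < x 1 ^ 2 := by positivity
          have h2 : 0 < (τ 0 0).im * (x 0 * ((τ 0 0).im * x 0 + (τ 0 1).im * x 1)
              + x 1 * ((τ 0 1).im * x 0 + (τ 1 1).im * x 1)) := by
            have h3 : 0 < ((τ 0 0).im * (τ 1 1).im - (τ 0 1).im ^ 2) * x 1 ^ 2 :=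
              mul_pos (by linarith) this
            nlinarith [sq_nonneg ((τ 0 0).im * x 0 + (τ 0 1).im * x 1)]
          exact pos_of_mul_pos_right h2 ha.le

lemma summable_gauss (T : ℝ) (hT : 0 < T) (e : ℤ) :
    Summable (fun n : ℤ => Real.exp (-Real.pi * T * ((n : ℝ) + e / 2) ^ 2)) := by
  have h := ((summable_jacobiTheta₂_term_iff (Complex.I * (T * e / 2 : ℝ)) (Complex.I * T)).2
    (by simpa using hT)).norm
  have h2 := h.mul_left (Real.exp (-Real.pi * T * (e / 2 : ℝ) ^ 2))
  refine h2.congr ?_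
  intro n
  rw [norm_jacobiTheta₂_term, ← Real.exp_add]
  congr 1
  simp
  ring

lemma summable_gterm {a b c : ℂ} (h : Dom a b c) (e f : ℤ) : Summable (gterm a b c e f) := by
  obtain ⟨ha, hc, hd⟩ := h
  -- a lower bound for the quadratic form
  obtain ⟨k, hk, hq⟩ : ∃ k : ℝ, 0 < k ∧ ∀ x y : ℝ,
      k * (x ^ 2 + y ^ 2) ≤ x ^ 2 * a.im + 2 * x * y * b.im + y ^ 2 * c.im := by
    refine ⟨(a.im * c.im - b.im ^ 2) / (a.im + c.im), div_pos (by linarith) (by linarith), ?_⟩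
    intro x y
    rw [div_mul_eq_mul_div, div_le_iff₀ (by linarith)]
    nlinarith [sq_nonneg (a.im * x + b.im * y), sq_nonneg (b.im * x + c.im * y)]
  have hs := (summable_gauss (2 * k) (by linarith) f).mul_of_nonneg
    (summable_gauss (2 * k) (by linarith) e) (fun _ => (Real.exp_pos _).le)
    (fun _ => (Real.exp_pos _).le)
  refine hs.of_norm_bounded ?_
  rintro ⟨m, n⟩
  unfold gterm
  rw [Complex.norm_exp, ← Real.exp_add]
  apply Real.exp_le_exp.2
  have := hq ((n : ℝ) + e / 2) ((m : ℝ) + f / 2)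
  have hpi := Real.pi_pos
  have e1 : (2 * (Real.pi : ℂ) * Complex.I * (((n : ℂ) + (e : ℂ) / 2) ^ 2 * a
      + 2 * ((n : ℂ) + (e : ℂ) / 2) * ((m : ℂ) + (f : ℂ) / 2) * b
      + ((m : ℂ) + (f : ℂ) / 2) ^ 2 * c)).re
      = -(2 * Real.pi) * (((n : ℝ) + e / 2) ^ 2 * a.im + 2 * ((n : ℝ) + e / 2) *
        ((m : ℝ) + f / 2) * b.im + ((m : ℝ) + f / 2) ^ 2 * c.im) := by
    have e2 : (2 * (Real.pi : ℂ) * Complex.I * (((n : ℂ) + (e : ℂ) / 2) ^ 2 * a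
      + 2 * ((n : ℂ) + (e : ℂ) / 2) * ((m : ℂ) + (f : ℂ) / 2) * b
      + ((m : ℂ) + (f : ℂ) / 2) ^ 2 * c)) = Complex.I * (
      ((2 * Real.pi * ((n : ℝ) + e / 2) ^ 2 : ℝ) : ℂ) * a
      + ((2 * Real.pi * (2 * ((n : ℝ) + e / 2) * ((m : ℝ) + f / 2)) : ℝ) : ℂ) * b
      + ((2 * Real.pi * ((m : ℝ) + f / 2) ^ 2 : ℝ) : ℂ) * c) := by
      push_cast; ring
    rw [e2, Complex.I_mul_re]
    simp only [Complex.add_im, Complex.im_ofReal_mul]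
    ring
  simp only
  rw [e1]
  nlinarith

lemma tsum_int_even_odd {g : ℤ → ℂ} (h : Summable g) :
    ∑' n, g n = ∑' k, g (2 * k) + ∑' k, g (2 * k + 1) := by
  have i1 : Function.Injective (fun k : ℤ => 2 * k) := fun a b hab => by
    simp only at hab; omega
  have i2 : Function.Injective (fun k : ℤ => 2 * k + 1) := fun a b hab => by
    simp only at hab; omega
  have h1 := i1.hasSum_range_iff.2 (h.comp_injective i1).hasSum
  have h2 := i2.hasSum_range_iff.2 (h.comp_injective i2).hasSum
  have hc : IsCompl (Set.range fun k : ℤ => 2 * k) (Set.range fun k : ℤ => 2 * k + 1) := by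
    refine ⟨?_, ?_⟩
    · rw [Set.disjoint_left]
      rintro _ ⟨k, rfl⟩ ⟨l, hl⟩
      simp only at hl
      omega
    · rw [codisjoint_iff_le_sup]
      intro n _
      rcases Int.even_or_odd' n with ⟨k, rfl | rfl⟩
      · exact Or.inl ⟨k, rfl⟩
      · exact Or.inr ⟨k, rfl⟩
  exact (h1.add_isCompl hc h2).tsum_eq

/-- The one-variable inversion. -/
lemma inner_inv {a b c : ℂ} (ha : 0 < a.im) (e f m : ℤ) :
    ∑' n, gterm (-1 / a) (b / a) (c - b ^ 2 / a) e f (m, n)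
      = (1 / (2 * Complex.I / a) ^ (1 / 2 : ℂ)) *
        (∑' n, gterm a b c 0 f (m, n) + (-1) ^ e * ∑' n, gterm a b c 1 f (m, n)) := by
  have ha0 : a ≠ 0 := by rintro rfl; simp at ha
  set x : ℂ := (m : ℂ) + (f : ℂ) / 2 with hx
  have step1 : ∑' n, gterm (-1 / a) (b / a) (c - b ^ 2 / a) e f (m, n)
      = Complex.exp (2 * Real.pi * Complex.I * ((e / 2 : ℂ) ^ 2 * (-1 / a) + e * x * (b / a)
          + x ^ 2 * (c - b ^ 2 / a))) *
        jacobiTheta₂ (e * (-1 / a) + 2 * x * (b / a)) (-2 / a) := by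
    unfold jacobiTheta₂
    rw [← tsum_mul_left]
    apply tsum_congr
    intro n
    unfold gterm jacobiTheta₂_term
    rw [← Complex.exp_add]
    congr 1
    simp only [← hx]
    ring
  have step2 : jacobiTheta₂ (-(e / 2) + x * b) (a / 2) =
      Complex.exp (- (2 * Real.pi * Complex.I * (x ^ 2 * c))) *
       (∑' n, gterm a b c 0 f (m, n) + (-1) ^ e * ∑' n, gterm a b c 1 f (m, n)) := by
    have hsum := (summable_jacobiTheta₂_term_iff (-(e / 2) + x * b) (a / 2)).2 (by
      simpa using ha)
    unfold jacobiTheta₂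
    rw [tsum_int_even_odd hsum, mul_add, ← tsum_mul_left, ← tsum_mul_left, ← tsum_mul_left]
    congr 1
    · apply tsum_congr
      intro n
      unfold gterm jacobiTheta₂_term
      rw [← Complex.exp_add, Complex.exp_eq_exp_iff_exists_int]
      refine ⟨-(n * e), ?_⟩
      simp only [← hx]
      push_cast
      ring
    · apply tsum_congr
      intro n
      unfold gterm jacobiTheta₂_term
      have : ((-1 : ℂ) ^ e) = Complex.exp (Real.pi * Complex.I * e) := by
        rw [← Complex.exp_pi_mul_I, ← Complex.exp_int_mul]
        congr 1; ring
      rw [this, ← Complex.exp_add, ← Complex.exp_add, Complex.exp_eq_exp_iff_exists_int]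
      refine ⟨-(n * e) - e, ?_⟩
      simp only [← hx]
      push_cast
      ring
  have hz : (e * (-1 / a) + 2 * x * (b / a)) / (-2 / a) = -(-(e / 2) + x * b) := by
    field_simp
  have hT : -1 / (-2 / a) = a / 2 := by field_simp
  rw [step1, jacobiTheta₂_functional_equation, hz, hT, jacobiTheta₂_neg_left, step2]
  have hI : -Complex.I * (-2 / a) = 2 * Complex.I / a := by ring
  rw [hI]
  set R := 1 / (2 * Complex.I / a) ^ (1 / 2 : ℂ)
  set Q := (∑' n, gterm a b c 0 f (m, n) + (-1) ^ e * ∑' n, gterm a b c 1 f (m, n))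
  have hexp : Complex.exp (2 * Real.pi * Complex.I * ((e / 2 : ℂ) ^ 2 * (-1 / a) + e * x * (b / a)
          + x ^ 2 * (c - b ^ 2 / a))) *
      Complex.exp (-Real.pi * Complex.I * (e * (-1 / a) + 2 * x * (b / a)) ^ 2 / (-2 / a)) *
      Complex.exp (- (2 * Real.pi * Complex.I * (x ^ 2 * c))) = 1 := by
    rw [← Complex.exp_add, ← Complex.exp_add, Complex.exp_eq_one_iff]
    refine ⟨0, ?_⟩
    push_cast
    field_simp
    ring
  linear_combination (R * Q) * hexp

lemma TH_inv {a b c : ℂ} (h : Dom a b c) (h' : Dom (-1 / a) (b / a) (c - b ^ 2 / a)) (e f : ℤ) :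
    TH (-1 / a) (b / a) (c - b ^ 2 / a) e f = (1 / (2 * Complex.I / a) ^ (1 / 2 : ℂ)) *
      (TH a b c 0 f + (-1) ^ e * TH a b c 1 f) := by
  unfold TH
  have s0 := summable_gterm h 0 f
  have s1 := summable_gterm h 1 f
  rw [(summable_gterm h' e f).tsum_prod, s0.tsum_prod, s1.tsum_prod]
  simp_rw [inner_inv h.1]
  rw [tsum_mul_left, Summable.tsum_add s0.prod (s1.prod.mul_left _), tsum_mul_left]

lemma TH_swap (a b c : ℂ) (e f : ℤ) : TH c b a e f = TH a b c f e := by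
  unfold TH
  rw [← (Equiv.prodComm ℤ ℤ).tsum_eq]
  apply tsum_congr
  rintro ⟨m, n⟩
  unfold gterm
  congr 1
  simp
  ring

lemma TH_trans (a b c : ℂ) (s t u e f : ℤ) :
    TH (a + s) (b + t) (c + u) e f =
      Complex.I ^ (e ^ 2 * s + 2 * e * f * t + f ^ 2 * u) * TH a b c e f := by
  have hI : ∀ k : ℤ, Complex.I ^ k = Complex.exp (Real.pi * Complex.I / 2 * k) := by
    intro k
    rw [mul_comm, Complex.exp_int_mul]
    congr 1
    rw [show (Real.pi * Complex.I / 2 : ℂ) = Real.pi / 2 * Complex.I by ring,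
      Complex.exp_pi_div_two_mul_I]
  unfold TH
  rw [hI, ← tsum_mul_left]
  apply tsum_congr
  rintro ⟨m, n⟩
  unfold gterm
  rw [← Complex.exp_add, Complex.exp_eq_exp_iff_exists_int]
  refine ⟨n ^ 2 * s + n * e * s + 2 * n * m * t + n * f * t + m * e * t + m ^ 2 * u + m * f * u, ?_⟩
  push_cast
  ring

/-- The degree 12 polynomial. -/
def Q12 (x y z w : ℂ) : ℂ :=
  (x ^ 4 + y ^ 4 + z ^ 4 + w ^ 4) ^ 3 - 9 * (x ^ 4 + y ^ 4 + z ^ 4 + w ^ 4) *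
    ((2 * (x ^ 2 * y ^ 2 + z ^ 2 * w ^ 2)) ^ 2 + (2 * (x ^ 2 * z ^ 2 + y ^ 2 * w ^ 2)) ^ 2
      + (2 * (x ^ 2 * w ^ 2 + y ^ 2 * z ^ 2)) ^ 2 - 4 * (4 * (x * y * z * w)) ^ 2)
    + 54 * ((2 * (x ^ 2 * y ^ 2 + z ^ 2 * w ^ 2)) * (2 * (x ^ 2 * z ^ 2 + y ^ 2 * w ^ 2)) *
      (2 * (x ^ 2 * w ^ 2 + y ^ 2 * z ^ 2)))

noncomputable def Ps (a b c : ℂ) : ℂ :=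
  Q12 (TH a b c 0 0) (TH a b c 0 1) (TH a b c 1 0) (TH a b c 1 1)

lemma Ψ6_eq (τ : Mat2) (h : τ 1 0 = τ 0 1) : Ψ6 τ = Ps (τ 0 0) (τ 0 1) (τ 1 1) := by
  unfold Ψ6 P0 P1 P2 P3 P4 Ps Q12
  simp only [Θf_eq _ _ τ h]

lemma Q12_had (r x y z w : ℂ) :
    Q12 (r * (x + z)) (r * (y + w)) (r * (x - z)) (r * (y - w)) = -64 * r ^ 12 * Q12 x y z w := by
  unfold Q12
  ring

lemma Q12_scale (p q v x y z w : ℂ) (hp : p ^ 4 = 1) (hq : q ^ 4 = 1) (hv : v ^ 2 = 1) :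
    Q12 x (q * y) (p * z) (p * q * v * w) = Q12 x y z w := by
  have hv4 : v ^ 4 = 1 := by linear_combination (v ^ 2 + 1) * hv
  have h0 : x ^ 4 + (q * y) ^ 4 + (p * z) ^ 4 + (p * q * v * w) ^ 4
      = x ^ 4 + y ^ 4 + z ^ 4 + w ^ 4 := by
    simp only [mul_pow, hp, hq, hv4]; ring
  have h1 : 2 * (x ^ 2 * (q * y) ^ 2 + (p * z) ^ 2 * (p * q * v * w) ^ 2)
      = q ^ 2 * (2 * (x ^ 2 * y ^ 2 + z ^ 2 * w ^ 2)) := by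
    have : (p * z) ^ 2 * (p * q * v * w) ^ 2 = p ^ 4 * v ^ 2 * (q ^ 2 * (z ^ 2 * w ^ 2)) := by ring
    rw [this, hp, hv]; ring
  have h2 : 2 * (x ^ 2 * (p * z) ^ 2 + (q * y) ^ 2 * (p * q * v * w) ^ 2)
      = p ^ 2 * (2 * (x ^ 2 * z ^ 2 + y ^ 2 * w ^ 2)) := by
    have : (q * y) ^ 2 * (p * q * v * w) ^ 2 = q ^ 4 * v ^ 2 * (p ^ 2 * (y ^ 2 * w ^ 2)) := by ring
    rw [this, hq, hv]; ring
  have h3 : 2 * (x ^ 2 * (p * q * v * w) ^ 2 + (q * y) ^ 2 * (p * z) ^ 2)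
      = p ^ 2 * q ^ 2 * (2 * (x ^ 2 * w ^ 2 + y ^ 2 * z ^ 2)) := by
    have : (p * q * v * w) ^ 2 = v ^ 2 * (p * q * w) ^ 2 := by ring
    rw [this, hv]; ring
  have h4 : (4 * (x * (q * y) * (p * z) * (p * q * v * w))) ^ 2 = (4 * (x * y * z * w)) ^ 2 := by
    have : (4 * (x * (q * y) * (p * z) * (p * q * v * w))) ^ 2
      = p ^ 4 * q ^ 4 * v ^ 2 * (4 * (x * y * z * w)) ^ 2 := by ring
    rw [this, hp, hq, hv]; ring
  unfold Q12
  rw [h0, h1, h2, h3, h4]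
  simp only [mul_pow, ← pow_mul]
  norm_num [hp, hq]
  have : ∀ A B C : ℂ, q ^ 2 * A * (p ^ 2 * B) * (p ^ 2 * q ^ 2 * C) = A * B * C := by
    intro A B C
    have : q ^ 2 * A * (p ^ 2 * B) * (p ^ 2 * q ^ 2 * C) = p ^ 4 * q ^ 4 * (A * B * C) := by ring
    rw [this, hp, hq]; ring
  rw [this]

lemma I_zpow_four (k : ℤ) : (Complex.I ^ k) ^ 4 = 1 := by
  rw [← zpow_natCast, ← zpow_mul, mul_comm, zpow_mul]
  norm_num [Complex.I_pow_four]

lemma Ps_trans (a b c : ℂ) (s t u : ℤ) : Ps (a + s) (b + t) (c + u) = Ps a b c := by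
  unfold Ps
  simp only [TH_trans]
  have hI := Complex.I_ne_zero
  have hv : ((-1 : ℂ) ^ t) ^ 2 = 1 := by
    rw [← zpow_natCast, ← zpow_mul, mul_comm, zpow_mul]; norm_num
  rw [← Q12_scale (Complex.I ^ s) (Complex.I ^ u) ((-1) ^ t) (TH a b c 0 0) (TH a b c 0 1)
    (TH a b c 1 0) (TH a b c 1 1) (I_zpow_four s)
    (I_zpow_four u) hv]
  have h11 : Complex.I ^ ((1 : ℤ) ^ 2 * s + 2 * 1 * 1 * t + 1 ^ 2 * u)
      = Complex.I ^ s * Complex.I ^ u * (-1) ^ t := by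
    rw [zpow_add₀ hI, zpow_add₀ hI]
    have : Complex.I ^ (2 * 1 * 1 * t) = (-1) ^ t := by
      rw [zpow_mul]; norm_num
    rw [this]
    ring_nf
  rw [h11]
  norm_num

lemma Ps_swap (a b c : ℂ) : Ps c b a = Ps a b c := by
  unfold Ps
  simp only [TH_swap a b c]
  unfold Q12
  ring

lemma Ps_inv {a b c : ℂ} (h : Dom a b c) (h' : Dom (-1 / a) (b / a) (c - b ^ 2 / a)) :
    Ps (-1 / a) (b / a) (c - b ^ 2 / a) = a ^ 6 * Ps a b c := by
  have ha0 : a ≠ 0 := by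
    have := h.1
    rintro rfl; simp at this
  unfold Ps
  simp only [TH_inv h h']
  set r := 1 / (2 * Complex.I / a) ^ (1 / 2 : ℂ) with hr
  have hr12 : -64 * r ^ 12 = a ^ 6 := by
    have : ((2 * Complex.I / a) ^ (1 / 2 : ℂ)) ^ 12 = (2 * Complex.I / a) ^ 6 := by
      rw [← Complex.cpow_nat_mul]
      norm_num
    rw [hr, div_pow, this, div_pow, mul_pow, show Complex.I ^ 6 = (Complex.I ^ 2) ^ 3 by ring,
      Complex.I_sq]
    field_simp
    norm_num
  rw [← hr12, ← Q12_had]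
  congr 1 <;> simp only [zpow_zero, zpow_one] <;> ring

lemma Dom_inv {a b c : ℂ} (h : Dom a b c) : Dom (-1 / a) (b / a) (c - b ^ 2 / a) := by
  obtain ⟨ha, hc, hd⟩ := h
  have hN : 0 < a.re ^ 2 + a.im ^ 2 := by positivity
  have i1 : (-1 / a).im = a.im / (a.re ^ 2 + a.im ^ 2) := by
    simp [Complex.div_im, Complex.normSq_apply]; ring
  have i2 : (b / a).im = (b.im * a.re - b.re * a.im) / (a.re ^ 2 + a.im ^ 2) := by
    simp [Complex.div_im, Complex.normSq_apply]; ring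
  have i3 : (c - b ^ 2 / a).im = (c.im * (a.re ^ 2 + a.im ^ 2) - (2 * b.re * b.im * a.re -
      (b.re ^ 2 - b.im ^ 2) * a.im)) / (a.re ^ 2 + a.im ^ 2) := by
    rw [eq_div_iff hN.ne']
    simp [Complex.div_im, Complex.normSq_apply, pow_two]
    field_simp
    ring
  have key : a.im * (c.im * (a.re ^ 2 + a.im ^ 2) - (2 * b.re * b.im * a.re -
      (b.re ^ 2 - b.im ^ 2) * a.im)) = (b.im * a.re - b.re * a.im) ^ 2
      + (a.im * c.im - b.im ^ 2) * (a.re ^ 2 + a.im ^ 2) := by ring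
  have hpos := mul_pos (sub_pos.2 hd) hN
  refine ⟨?_, ?_, ?_⟩
  · rw [i1]; positivity
  · rw [i3]
    refine div_pos ?_ hN
    refine pos_of_mul_pos_right (a := a.im) ?_ ha.le
    rw [key]
    positivity
  · rw [i1, i2, i3, div_pow, div_mul_div_comm, ← pow_two]
    gcongr
    rw [key]
    linarith

/-! ### The action -/

def Good (M : Matrix (Fin 4) (Fin 4) ℤ) : Prop := ∀ τ ∈ SiegelH2,
    IsUnit (blkC M * τ + blkD M) ∧
    (blkA M * τ + blkB M) * (blkC M * τ + blkD M)⁻¹ ∈ SiegelH2 ∧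
    Ψ6 ((blkA M * τ + blkB M) * (blkC M * τ + blkD M)⁻¹)
      = (blkC M * τ + blkD M).det ^ 6 * Ψ6 τ

lemma blk_mul (M N : Matrix (Fin 4) (Fin 4) ℤ) :
    blkA (M * N) = blkA M * blkA N + blkB M * blkC N ∧
    blkB (M * N) = blkA M * blkB N + blkB M * blkD N ∧
    blkC (M * N) = blkC M * blkA N + blkD M * blkC N ∧
    blkD (M * N) = blkC M * blkB N + blkD M * blkD N := by
  refine ⟨?_, ?_, ?_, ?_⟩ <;> ext i j <;>
    simp [blkA, blkB, blkC, blkD, Matrix.mul_apply, Fin.sum_univ_four, Fin.sum_univ_two] <;> ring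

lemma Good_mul {M N : Matrix (Fin 4) (Fin 4) ℤ} (hM : Good M) (hN : Good N) : Good (M * N) := by
  intro τ hτ
  obtain ⟨u1, m1, p1⟩ := hN τ hτ
  obtain ⟨u2, m2, p2⟩ := hM _ m1
  obtain ⟨eA, eB, eC, eD⟩ := blk_mul M N
  set τ' := (blkA N * τ + blkB N) * (blkC N * τ + blkD N)⁻¹ with hτ'
  have hdet := (Matrix.isUnit_iff_isUnit_det _).1 u1
  have h1 : τ' * (blkC N * τ + blkD N) = blkA N * τ + blkB N := by
    rw [hτ', Matrix.mul_assoc, Matrix.nonsing_inv_mul _ hdet, Matrix.mul_one]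
  have hC : blkC (M * N) * τ + blkD (M * N) = (blkC M * τ' + blkD M) * (blkC N * τ + blkD N) := by
    rw [Matrix.add_mul (blkC M * τ'), Matrix.mul_assoc (blkC M), h1, eC, eD]
    noncomm_ring
  have hA : blkA (M * N) * τ + blkB (M * N) = (blkA M * τ' + blkB M) * (blkC N * τ + blkD N) := by
    rw [Matrix.add_mul (blkA M * τ'), Matrix.mul_assoc (blkA M), h1, eA, eB]
    noncomm_ring
  have hq : (blkA (M * N) * τ + blkB (M * N)) * (blkC (M * N) * τ + blkD (M * N))⁻¹
      = (blkA M * τ' + blkB M) * (blkC M * τ' + blkD M)⁻¹ := by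
    rw [hC, hA, Matrix.mul_inv_rev, Matrix.mul_assoc,
      ← Matrix.mul_assoc (blkC N * τ + blkD N), Matrix.mul_nonsing_inv _ hdet, Matrix.one_mul]
  rw [hq, hC]
  refine ⟨u2.mul u1, m2, ?_⟩
  rw [p2, p1, Matrix.det_mul]
  ring

lemma Good_of {M : Matrix (Fin 4) (Fin 4) ℤ} (h : ∀ τ ∈ SiegelH2, ∃ τ' ∈ SiegelH2,
    (blkC M * τ + blkD M).det ≠ 0 ∧ blkA M * τ + blkB M = τ' * (blkC M * τ + blkD M) ∧
    Ψ6 τ' = (blkC M * τ + blkD M).det ^ 6 * Ψ6 τ) : Good M := by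
  intro τ hτ
  obtain ⟨τ', h1, h2, h3, h4⟩ := h τ hτ
  have hu : IsUnit (blkC M * τ + blkD M).det := isUnit_iff_ne_zero.2 h2
  have : (blkA M * τ + blkB M) * (blkC M * τ + blkD M)⁻¹ = τ' := by
    rw [h3, Matrix.mul_assoc, Matrix.mul_nonsing_inv _ hu, Matrix.mul_one]
  rw [this]
  exact ⟨(Matrix.isUnit_iff_isUnit_det _).2 hu, h1, h4⟩

lemma Good_one : Good 1 := by
  apply Good_of
  intro τ hτ
  have hC : blkC 1 * τ + blkD 1 = 1 := by
    ext i j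
    fin_cases i <;> fin_cases j <;>
      simp [blkC, blkD, Matrix.mul_apply, Fin.sum_univ_two, Matrix.one_apply]
  have hA : blkA 1 * τ + blkB 1 = τ := by
    ext i j
    fin_cases i <;> fin_cases j <;>
      simp [blkA, blkB, Matrix.mul_apply, Fin.sum_univ_two, Matrix.one_apply]
  exact ⟨τ, hτ, by simp [hC], by simp [hC, hA], by simp [hC]⟩

lemma Good_T (s t u : ℤ) : Good (Tm s t u) := by
  apply Good_of
  intro τ hτ
  have hC : blkC (Tm s t u) * τ + blkD (Tm s t u) = 1 := by
    ext i j
    fin_cases i <;> fin_cases j <;>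
      simp [blkC, blkD, Tm, Matrix.mul_apply, Fin.sum_univ_two]
  have hA : blkA (Tm s t u) * τ + blkB (Tm s t u) = τ + !![(s : ℂ), (t : ℂ); (t : ℂ), (u : ℂ)] := by
    ext i j
    fin_cases i <;> fin_cases j <;>
      simp [blkA, blkB, Tm, Matrix.mul_apply, Fin.sum_univ_two]
  obtain ⟨hs, hD⟩ := (mem_H2_iff τ).1 hτ
  refine ⟨τ + !![(s : ℂ), (t : ℂ); (t : ℂ), (u : ℂ)], ?_, by simp [hC], by simp [hC, hA], ?_⟩
  · rw [mem_H2_iff]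
    simpa [hs, Dom] using hD
  · rw [hC, Ψ6_eq _ hs, Ψ6_eq _ (by simp [hs])]
    simp [Ps_trans]

lemma Good_P : Good Pm := by
  apply Good_of
  intro τ hτ
  have hC : blkC Pm * τ + blkD Pm = !![0, 1; 1, 0] := by
    ext i j
    fin_cases i <;> fin_cases j <;>
      simp [blkC, blkD, Pm, Matrix.mul_apply, Fin.sum_univ_two]
  have hA : blkA Pm * τ + blkB Pm = !![τ 1 0, τ 1 1; τ 0 0, τ 0 1] := by
    ext i j
    fin_cases i <;> fin_cases j <;>
      simp [blkA, blkB, Pm, Matrix.mul_apply, Fin.sum_univ_two]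
  obtain ⟨hs, h1, h2, h3⟩ := (mem_H2_iff τ).1 hτ
  refine ⟨!![τ 1 1, τ 0 1; τ 0 1, τ 0 0], ?_, ?_, ?_, ?_⟩
  · rw [mem_H2_iff]
    simp [Dom, h1, h2]
    linarith
  · simp [hC, Matrix.det_fin_two]
  · rw [hC, hA]
    ext i j
    fin_cases i <;> fin_cases j <;> simp [Matrix.mul_apply, Fin.sum_univ_two, hs]
  · rw [hC, Ψ6_eq _ hs, Ψ6_eq _ (by simp)]
    simp [Matrix.det_fin_two, Ps_swap (τ 0 0)]
    norm_num

lemma Good_J1 : Good J1m := by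
  apply Good_of
  intro τ hτ
  have hC : blkC J1m * τ + blkD J1m = !![τ 0 0, τ 0 1; 0, 1] := by
    ext i j
    fin_cases i <;> fin_cases j <;>
      simp [blkC, blkD, J1m, Matrix.mul_apply, Fin.sum_univ_two]
  have hA : blkA J1m * τ + blkB J1m = !![-1, 0; τ 1 0, τ 1 1] := by
    ext i j
    fin_cases i <;> fin_cases j <;>
      simp [blkA, blkB, J1m, Matrix.mul_apply, Fin.sum_univ_two]
  obtain ⟨hs, hD⟩ := (mem_H2_iff τ).1 hτ
  have ha0 : τ 0 0 ≠ 0 := by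
    intro h
    have := hD.1
    simp [h] at this
  have hD' := Dom_inv hD
  refine ⟨!![-1 / τ 0 0, τ 0 1 / τ 0 0; τ 0 1 / τ 0 0, τ 1 1 - τ 0 1 ^ 2 / τ 0 0],
    ?_, ?_, ?_, ?_⟩
  · rw [mem_H2_iff]
    exact ⟨rfl, hD'⟩
  · simp [hC, Matrix.det_fin_two, ha0]
  · rw [hC, hA]
    ext i j
    fin_cases i <;> fin_cases j <;> simp [Matrix.mul_apply, Fin.sum_univ_two, hs] <;>
      field_simp <;> ring
  · rw [hC, Ψ6_eq _ hs, Ψ6_eq _ rfl]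
    have := Ps_inv hD hD'
    simpa [Matrix.det_fin_two] using this

lemma Good_of_K {M : Matrix (Fin 4) (Fin 4) ℤ} (h : M ∈ K) : Good M := by
  induction h using Submonoid.closure_induction with
  | mem x hx =>
    rcases hx with rfl | rfl | ⟨s, t, u, rfl⟩
    · exact Good_J1
    · exact Good_P
    · exact Good_T _ _ _
  | one => exact Good_one
  | mul x y _ _ hx hy => exact Good_mul hx hy

/-- `Ψ₆` is a Siegel modular form of weight 6 for `Sp(4,ℤ)`. -/
theorem statement11 : ∀ M ∈ Sp4Z, ∀ τ ∈ SiegelH2,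
    IsUnit (blkC M * τ + blkD M) ∧
    (blkA M * τ + blkB M) * (blkC M * τ + blkD M)⁻¹ ∈ SiegelH2 ∧
    Ψ6 ((blkA M * τ + blkB M) * (blkC M * τ + blkD M)⁻¹)
      = (blkC M * τ + blkD M).det ^ 6 * Ψ6 τ := by
  intro M hM
  exact Good_of_K (Sp4_le_K hM)

end TwoLoop
end

section
/- The function Ψ₆ = P₀³ − 9P₀(P₁² + P₂² + P₃² − 4P₄²) + 54P₁P₂P₃ does NOT belong to the ℂ-linear span of the set of products θ⁴[δᵢ]θ⁴[δⱼ]θ⁴[δₖ], where δᵢ, δⱼ, δₖ range over the ten even characteristics subject to the condition that the componentwise mod-2 sum δᵢ+δⱼ+δₖ is an odd characteristic. -/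
open scoped BigOperators

namespace TwoLoop

/-- The scalar matrix `i s · 1`. -/
noncomputable def diagPt (s : ℝ) : Mat2 := ((s : ℂ) * Complex.I) • (1 : Mat2)

lemma diagPt_mem (s : ℝ) (hs : 0 < s) : diagPt s ∈ SiegelH2 := by
  refine ⟨by simp [diagPt], ?_⟩
  have : (diagPt s).map Complex.im = Matrix.diagonal (fun _ : Fin 2 => s) := by
    ext i j
    fin_cases i <;> fin_cases j <;> simp [diagPt]
  rw [this]
  exact Matrix.PosDef.diagonal (fun _ => hs)

lemma two_smul_diagPt (s : ℝ) : (2 : ℂ) • diagPt s = diagPt (2 * s) := by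
  simp only [diagPt, smul_smul]
  push_cast
  congr 1
  ring

lemma term_norm (a b n : Fin 2 → ℤ) (s : ℝ) :
    ‖Complex.exp ((Real.pi : ℂ) * Complex.I *
      ((∑ i, ∑ j, ((n i : ℂ) + (a i : ℂ) / 2) * diagPt s i j * ((n j : ℂ) + (a j : ℂ) / 2))
        + ∑ i, ((n i : ℂ) + (a i : ℂ) / 2) * (b i : ℂ)))‖ =
    Real.exp (-(Real.pi * (((n 0 : ℝ) + a 0 / 2) ^ 2 + ((n 1 : ℝ) + a 1 / 2) ^ 2)) * s) := by
  rw [Complex.norm_exp]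
  congr 1
  have : ((Real.pi : ℂ) * Complex.I *
      ((∑ i, ∑ j, ((n i : ℂ) + (a i : ℂ) / 2) * diagPt s i j * ((n j : ℂ) + (a j : ℂ) / 2))
        + ∑ i, ((n i : ℂ) + (a i : ℂ) / 2) * (b i : ℂ))) =
      ((-(Real.pi * (((n 0 : ℝ) + a 0 / 2) ^ 2 + ((n 1 : ℝ) + a 1 / 2) ^ 2)) * s : ℝ) : ℂ)
      + ((Real.pi * (((n 0 : ℝ) + a 0 / 2) * b 0 + ((n 1 : ℝ) + a 1 / 2) * b 1) : ℝ) : ℂ)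
        * Complex.I := by
    simp [Fin.sum_univ_two, diagPt]
    linear_combination ((Real.pi : ℂ) * s *
      (((n 0 : ℂ) + a 0 / 2) ^ 2 + ((n 1 : ℂ) + a 1 / 2) ^ 2)) * Complex.I_sq
  rw [this, Complex.add_re, Complex.ofReal_re, Complex.re_ofReal_mul, Complex.I_re]
  ring

lemma summable_exp_abs : Summable (fun n : ℤ => Real.exp (-|(n : ℝ)|)) := by
  apply Summable.of_nat_of_neg
  · simpa using Real.summable_exp_neg_nat
  · simpa using Real.summable_exp_neg_nat

lemma summable_bound (C : ℝ) :
    Summable (fun n : Fin 2 → ℤ => Real.exp C * (Real.exp (-|(n 0 : ℝ)|) * Real.exp (-|(n 1 : ℝ)|))) := by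
  apply Summable.mul_left
  have h := summable_exp_abs.mul_of_nonneg summable_exp_abs
    (fun _ => (Real.exp_pos _).le) (fun _ => (Real.exp_pos _).le)
  exact (finTwoArrowEquiv ℤ).summable_iff.mpr h

lemma sq_bound (n c : ℝ) : |n| - |c| - 1 ≤ (n + c) ^ 2 := by
  have h : |n| ≤ |n + c| + |c| := by
    have := abs_sub (n + c) c
    simpa using this
  nlinarith [sq_abs (n + c), sq_nonneg (|n + c| - 1), abs_nonneg (n + c)]

lemma tendsto_theta (a b : Fin 2 → ℤ) :
    Filter.Tendsto (fun s : ℝ => theta (a, b) (diagPt s)) Filter.atTop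
      (nhds (∑' n : Fin 2 → ℤ, if 2 * n 0 + a 0 = 0 ∧ 2 * n 1 + a 1 = 0 then (1 : ℂ) else 0)) := by
  unfold theta
  refine tendsto_tsum_of_dominated_convergence
    (summable_bound (Real.pi * (|(a 0 / 2 : ℝ)| + |(a 1 / 2 : ℝ)| + 2))) ?_ ?_
  · intro n
    split_ifs with h
    · have h0 : (n 0 : ℂ) + a 0 / 2 = 0 := by
        have : ((2 * n 0 + a 0 : ℤ) : ℂ) = 0 := by rw [h.1]; simp
        push_cast at this
        linear_combination this / 2
      have h1 : (n 1 : ℂ) + a 1 / 2 = 0 := by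
        have : ((2 * n 1 + a 1 : ℤ) : ℂ) = 0 := by rw [h.2]; simp
        push_cast at this
        linear_combination this / 2
      simp [Fin.sum_univ_two, h0, h1]
    · rw [tendsto_zero_iff_norm_tendsto_zero]
      simp only [term_norm]
      apply Real.tendsto_exp_atBot.comp
      apply Filter.Tendsto.const_mul_atTop_of_neg _ Filter.tendsto_id
      rw [neg_lt_zero]
      apply mul_pos Real.pi_pos
      by_contra hc
      apply h
      have e0 : ((n 0 : ℝ) + a 0 / 2) = 0 := by
        nlinarith [sq_nonneg ((n 0 : ℝ) + a 0 / 2), sq_nonneg ((n 1 : ℝ) + a 1 / 2)]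
      have e1 : ((n 1 : ℝ) + a 1 / 2) = 0 := by
        nlinarith [sq_nonneg ((n 0 : ℝ) + a 0 / 2), sq_nonneg ((n 1 : ℝ) + a 1 / 2)]
      constructor
      · have : ((2 * n 0 + a 0 : ℤ) : ℝ) = 0 := by push_cast; linarith
        exact_mod_cast this
      · have : ((2 * n 1 + a 1 : ℤ) : ℝ) = 0 := by push_cast; linarith
        exact_mod_cast this
  · filter_upwards [Filter.eventually_ge_atTop 1] with s hs n
    rw [term_norm, ← Real.exp_add, ← Real.exp_add]
    apply Real.exp_le_exp.mpr
    have b0 := sq_bound (n 0 : ℝ) (a 0 / 2)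
    have b1 := sq_bound (n 1 : ℝ) (a 1 / 2)
    have hp := Real.pi_gt_three
    have q : 0 ≤ ((n 0 : ℝ) + a 0 / 2) ^ 2 + ((n 1 : ℝ) + a 1 / 2) ^ 2 := by positivity
    have q1 : Real.pi * (((n 0 : ℝ) + a 0 / 2) ^ 2 + ((n 1 : ℝ) + a 1 / 2) ^ 2) ≤
        Real.pi * (((n 0 : ℝ) + a 0 / 2) ^ 2 + ((n 1 : ℝ) + a 1 / 2) ^ 2) * s :=
      le_mul_of_one_le_right (by positivity) hs
    have q2 : Real.pi * ((|(n 0 : ℝ)| + |(n 1 : ℝ)|) - (|(a 0 / 2 : ℝ)| + |(a 1 / 2 : ℝ)| + 2)) ≤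
        Real.pi * (((n 0 : ℝ) + a 0 / 2) ^ 2 + ((n 1 : ℝ) + a 1 / 2) ^ 2) :=
      mul_le_mul_of_nonneg_left (by linarith) Real.pi_pos.le
    have q3 : |(n 0 : ℝ)| + |(n 1 : ℝ)| ≤ Real.pi * (|(n 0 : ℝ)| + |(n 1 : ℝ)|) :=
      le_mul_of_one_le_left (by positivity) (by linarith)
    linarith

/-- Limit of the theta constant at the cusp. -/
noncomputable def lim (a : Fin 2 → ℤ) : ℂ := if a = ![0, 0] then 1 else 0

lemma tsum_lim (a : Fin 2 → ℤ)
    (ha : a = ![0, 0] ∨ a = ![0, 1] ∨ a = ![1, 0] ∨ a = ![1, 1]) :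
    (∑' n : Fin 2 → ℤ, if 2 * n 0 + a 0 = 0 ∧ 2 * n 1 + a 1 = 0 then (1 : ℂ) else 0) = lim a := by
  rcases ha with rfl | rfl | rfl | rfl
  · have : ∀ n : Fin 2 → ℤ, (if 2 * n 0 + (![0, 0] : Fin 2 → ℤ) 0 = 0 ∧
        2 * n 1 + (![0, 0] : Fin 2 → ℤ) 1 = 0 then (1 : ℂ) else 0) = if n = 0 then 1 else 0 := by
      intro n
      congr 1
      simp [funext_iff, Fin.forall_fin_two]
    simp only [this, tsum_ite_eq, lim]
    simp
  all_goals
    have h2 : ∀ m : ℤ, ¬ (2 * m + 1 = 0) := by intro m; omega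
    simp [lim, h2]

lemma tendsto_theta' (a b : Fin 2 → ℤ)
    (ha : a = ![0, 0] ∨ a = ![0, 1] ∨ a = ![1, 0] ∨ a = ![1, 1]) :
    Filter.Tendsto (fun s : ℝ => theta (a, b) (diagPt s)) Filter.atTop (nhds (lim a)) := by
  rw [← tsum_lim a ha]
  exact tendsto_theta a b

lemma tendsto_Θf (a : Fin 2 → ℤ)
    (ha : a = ![0, 0] ∨ a = ![0, 1] ∨ a = ![1, 0] ∨ a = ![1, 1]) :
    Filter.Tendsto (fun s : ℝ => Θf a (diagPt s)) Filter.atTop (nhds (lim a)) := by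
  have e : (fun s : ℝ => Θf a (diagPt s)) = fun s : ℝ => theta (a, ![0, 0]) (diagPt (2 * s)) := by
    funext s
    rw [← two_smul_diagPt]
    rfl
  rw [e]
  exact (tendsto_theta' a ![0, 0] ha).comp
    (Filter.Tendsto.const_mul_atTop (by norm_num : (0 : ℝ) < 2) Filter.tendsto_id)

lemma tendsto_Ψ6 : Filter.Tendsto (fun s : ℝ => Ψ6 (diagPt s)) Filter.atTop (nhds 1) := by
  have A := tendsto_Θf ![0, 0] (by simp)
  have B := tendsto_Θf ![0, 1] (by simp)
  have C := tendsto_Θf ![1, 0] (by simp)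
  have D := tendsto_Θf ![1, 1] (by simp)
  have h0 := (((A.pow 4).add (B.pow 4)).add (C.pow 4)).add (D.pow 4)
  have h1 := (((A.pow 2).mul (B.pow 2)).add ((C.pow 2).mul (D.pow 2))).const_mul 2
  have h2 := (((A.pow 2).mul (C.pow 2)).add ((B.pow 2).mul (D.pow 2))).const_mul 2
  have h3 := (((A.pow 2).mul (D.pow 2)).add ((B.pow 2).mul (C.pow 2))).const_mul 2
  have h4 := (((A.mul B).mul C).mul D).const_mul 4
  have h := ((h0.pow 3).sub ((h0.const_mul 9).mul
    ((((h1.pow 2).add (h2.pow 2)).add (h3.pow 2)).sub ((h4.pow 2).const_mul 4)))).add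
    (((h1.mul h2).mul h3).const_mul 54)
  simp only [lim] at h
  refine Filter.Tendsto.congr (fun s => ?_) (h.trans (le_of_eq ?_))
  · rfl
  · congr 1
    simp

lemma δev_fst (i : Fin 10) : (δev i).1 = ![0, 0] ∨ (δev i).1 = ![0, 1] ∨
    (δev i).1 = ![1, 0] ∨ (δev i).1 = ![1, 1] := by
  revert i; decide

lemma lim_prod (i j k : Fin 10)
    (h : IsOddChar (addChar (addChar (δev i) (δev j)) (δev k))) :
    lim (δev i).1 ^ 4 * lim (δev j).1 ^ 4 * lim (δev k).1 ^ 4 = 0 := by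
  by_cases hi : (δev i).1 = ![0, 0]
  · by_cases hj : (δev j).1 = ![0, 0]
    · by_cases hk : (δev k).1 = ![0, 0]
      · exfalso
        simp [IsOddChar, addChar, hi, hj, hk] at h
      · simp [lim, hk]
    · simp [lim, hj]
  · simp [lim, hi]

/-- `Ψ₆` is not in the span of the products `θ⁴[δᵢ]θ⁴[δⱼ]θ⁴[δₖ]` with
`δᵢ+δⱼ+δₖ` an odd characteristic. -/
theorem statement13 :
    (fun τ : SiegelH2 => Ψ6 τ.1) ∉ Submodule.span ℂ
      {g : SiegelH2 → ℂ | ∃ i j k : Fin 10,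
        IsOddChar (addChar (addChar (δev i) (δev j)) (δev k)) ∧
        g = fun τ : SiegelH2 =>
          theta (δev i) τ.1 ^ 4 * theta (δev j) τ.1 ^ 4 * theta (δev k) τ.1 ^ 4} := by
  intro hmem
  have key : ∀ f ∈ Submodule.span ℂ
      {g : SiegelH2 → ℂ | ∃ i j k : Fin 10,
        IsOddChar (addChar (addChar (δev i) (δev j)) (δev k)) ∧
        g = fun τ : SiegelH2 =>
          theta (δev i) τ.1 ^ 4 * theta (δev j) τ.1 ^ 4 * theta (δev k) τ.1 ^ 4},
      Filter.Tendsto (fun t : ℝ => f ⟨diagPt (Real.exp t), diagPt_mem _ (Real.exp_pos t)⟩)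
        Filter.atTop (nhds 0) := by
    intro f hf
    induction hf using Submodule.span_induction with
    | mem g hg =>
      obtain ⟨i, j, k, hodd, rfl⟩ := hg
      have hT : ∀ l : Fin 10, Filter.Tendsto (fun t : ℝ => theta (δev l) (diagPt (Real.exp t)))
          Filter.atTop (nhds (lim (δev l).1)) := fun l =>
        (tendsto_theta' (δev l).1 (δev l).2 (δev_fst l)).comp Real.tendsto_exp_atTop
      rw [← lim_prod i j k hodd]
      exact (((hT i).pow 4).mul ((hT j).pow 4)).mul ((hT k).pow 4)
    | zero => exact tendsto_const_nhds
    | add x y _ _ hx hy => simpa using hx.add hy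
    | smul c x _ hx => simpa using hx.const_mul c
  have h0 := key _ hmem
  have h1 := tendsto_Ψ6.comp Real.tendsto_exp_atTop
  exact one_ne_zero (tendsto_nhds_unique h1 h0)

end TwoLoop
end

section
/- The ℂ-linear span of the products θ⁴[δᵢ]θ⁴[δⱼ]θ⁴[δₖ] over triples of even characteristics whose componentwise mod-2 sum δᵢ+δⱼ+δₖ is an even characteristic equals the ℂ-linear span of ALL products θ⁴[δᵢ]θ⁴[δⱼ]θ⁴[δₖ] over triples of even characteristics, and this common span has dimension exactly 35. In particular Ψ₆ = P₀³ − 9P₀(P₁²+P₂²+P₃²−4P₄²) + 54P₁P₂P₃ is a ℂ-linear combination of products θ⁴[δᵢ]θ⁴[δⱼ]θ⁴[δₖ] with δᵢ+δⱼ+δₖ even. -/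
open scoped BigOperators

namespace TwoLoop

/-- The general term of the theta series. -/
noncomputable def tterm (κ : Char) (τ : Mat2) (n : Fin 2 → ℤ) : ℂ :=
    Complex.exp ((Real.pi : ℂ) * Complex.I *
      ((∑ i, ∑ j, ((n i : ℂ) + (κ.1 i : ℂ) / 2) * τ i j * ((n j : ℂ) + (κ.1 j : ℂ) / 2))
        + ∑ i, ((n i : ℂ) + (κ.1 i : ℂ) / 2) * (κ.2 i : ℂ)))

lemma theta_eq (κ : Char) (τ : Mat2) : theta κ τ = ∑' n, tterm κ τ n := rfl

lemma summable_gauss2 (a b c d : ℝ) (hc : 0 < c) (hd : 0 < d) :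
    Summable (fun n : Fin 2 → ℤ =>
      Real.exp (-Real.pi * ((n 0 : ℝ) + a) ^ 2 * c) *
        Real.exp (-Real.pi * ((n 1 : ℝ) + b) ^ 2 * d)) := by
  have h1 := (HurwitzZeta.hasSum_int_evenKernel a hc).summable
  have h2 := (HurwitzZeta.hasSum_int_evenKernel b hd).summable
  have h := h1.mul_of_nonneg h2 (fun _ => (Real.exp_pos _).le) (fun _ => (Real.exp_pos _).le)
  exact (Equiv.summable_iff (finTwoArrowEquiv ℤ)).mpr h

lemma siegel_bound {τ : Mat2} (hτ : τ ∈ SiegelH2) :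
    ∃ c : ℝ, 0 < c ∧ ∀ x y : ℝ, c * x ^ 2 + c * y ^ 2 ≤
      (τ 0 0).im * x ^ 2 + 2 * (τ 0 1).im * x * y + (τ 1 1).im * y ^ 2 := by
  obtain ⟨hs, hp⟩ := hτ
  have h0 : 0 < (τ 0 0).im := by simpa using hp.diag_pos (i := 0)
  have h1 : 0 < (τ 1 1).im := by simpa using hp.diag_pos (i := 1)
  have h01 : τ 1 0 = τ 0 1 := by
    have := congrFun (congrFun hs 0) 1
    simpa [Matrix.transpose_apply] using this
  have hd := hp.det_pos
  rw [Matrix.det_fin_two] at hd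
  simp only [Matrix.map_apply, h01] at hd
  generalize (τ 0 0).im = p at *
  generalize (τ 1 1).im = r at *
  generalize (τ 0 1).im = q at *
  have ht : 0 < p + r := by linarith
  obtain ⟨c, hc⟩ : ∃ c, c = (p * r - q * q) / (p + r) := ⟨_, rfl⟩
  have hc' : c * (p + r) = p * r - q * q := by rw [hc]; field_simp
  have hc0 : 0 < c := by rw [hc]; positivity
  refine ⟨c, hc0, fun x y => ?_⟩
  have hpc : 0 < p - c := by
    by_contra hh
    nlinarith [mul_self_nonneg q, mul_pos h0 h0, mul_pos h1 hc0, mul_pos h0 h1]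
  have key : (p - c) * (r - c) - q ^ 2 = c ^ 2 := by nlinarith
  have : 0 ≤ (p - c) * ((p - c) * x ^ 2 + 2 * q * x * y + (r - c) * y ^ 2) := by
    have : (p - c) * ((p - c) * x ^ 2 + 2 * q * x * y + (r - c) * y ^ 2)
      = ((p - c) * x + q * y) ^ 2 + c ^ 2 * y ^ 2 := by linear_combination y ^ 2 * key
    rw [this]; positivity
  have := nonneg_of_mul_nonneg_right this hpc
  linarith

lemma norm_tterm (κ : Char) (τ : Mat2) (hs : τ 1 0 = τ 0 1) (n : Fin 2 → ℤ) :
    ‖tterm κ τ n‖ = Real.exp (-Real.pi * (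
      (τ 0 0).im * ((n 0 : ℝ) + (κ.1 0 : ℝ) / 2) ^ 2
      + 2 * (τ 0 1).im * ((n 0 : ℝ) + (κ.1 0 : ℝ) / 2) * ((n 1 : ℝ) + (κ.1 1 : ℝ) / 2)
      + (τ 1 1).im * ((n 1 : ℝ) + (κ.1 1 : ℝ) / 2) ^ 2)) := by
  unfold tterm
  rw [Complex.norm_exp]
  congr 1
  obtain ⟨x, hx⟩ : ∃ x : ℝ, x = (n 0 : ℝ) + (κ.1 0 : ℝ) / 2 := ⟨_, rfl⟩
  obtain ⟨y, hy⟩ : ∃ y : ℝ, y = (n 1 : ℝ) + (κ.1 1 : ℝ) / 2 := ⟨_, rfl⟩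
  have hx' : (n 0 : ℂ) + (κ.1 0 : ℂ) / 2 = (x : ℂ) := by rw [hx]; push_cast; rfl
  have hy' : (n 1 : ℂ) + (κ.1 1 : ℂ) / 2 = (y : ℂ) := by rw [hy]; push_cast; rfl
  simp only [Fin.sum_univ_two, hs, hx', hy', ← hx, ← hy]
  simp
  ring

lemma siegel_symm {τ : Mat2} (hτ : τ ∈ SiegelH2) : τ 1 0 = τ 0 1 := by
  have := congrFun (congrFun hτ.1 0) 1
  simpa [Matrix.transpose_apply] using this

lemma summable_norm_tterm (κ : Char) {τ : Mat2} (hτ : τ ∈ SiegelH2) :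
    Summable (fun n => ‖tterm κ τ n‖) := by
  obtain ⟨c, hc, h⟩ := siegel_bound hτ
  refine Summable.of_nonneg_of_le (fun _ => norm_nonneg _) (fun n => ?_)
    (summable_gauss2 ((κ.1 0 : ℝ) / 2) ((κ.1 1 : ℝ) / 2) c c hc hc)
  rw [norm_tterm κ τ (siegel_symm hτ), ← Real.exp_add]
  apply Real.exp_le_exp.mpr
  have := mul_le_mul_of_nonneg_left (h ((n 0 : ℝ) + (κ.1 0 : ℝ) / 2) ((n 1 : ℝ) + (κ.1 1 : ℝ) / 2))
    Real.pi_pos.le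
  linarith

lemma two_smul_mem {τ : Mat2} (hτ : τ ∈ SiegelH2) : (2 : ℂ) • τ ∈ SiegelH2 := by
  refine ⟨by rw [Matrix.transpose_smul, hτ.1], ?_⟩
  have : ((2 : ℂ) • τ).map Complex.im = (2 : ℝ) • τ.map Complex.im := by
    ext i j; simp
  rw [this]
  exact hτ.2.smul (by norm_num)

/-- Reindexing `n = p + q + σ`, `m = p - q`. -/
def reidx : ((Fin 2 × Fin 2) × ((Fin 2 → ℤ) × (Fin 2 → ℤ))) ≃ ((Fin 2 → ℤ) × (Fin 2 → ℤ)) where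
  toFun x := (fun i => x.2.1 i + x.2.2 i + ((![x.1.1, x.1.2] i : Fin 2) : ℕ),
    fun i => x.2.1 i - x.2.2 i)
  invFun y := ((⟨((y.1 0 - y.2 0) % 2).toNat, by omega⟩, ⟨((y.1 1 - y.2 1) % 2).toNat, by omega⟩),
    (fun i => y.2 i + (y.1 i - y.2 i) / 2, fun i => (y.1 i - y.2 i) / 2))
  left_inv := by
    rintro ⟨⟨s, t⟩, p, q⟩
    have hs := s.2
    have ht := t.2
    refine Prod.ext (Prod.ext (Fin.ext ?_) (Fin.ext ?_)) (Prod.ext (funext fun i => ?_) (funext fun i => ?_))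
    · simp; omega
    · simp; omega
    · fin_cases i <;> simp <;> omega
    · fin_cases i <;> simp <;> omega
  right_inv := by
    rintro ⟨n, m⟩
    refine Prod.ext (funext fun i => ?_) (funext fun i => ?_)
    · fin_cases i <;> simp <;> omega
    · fin_cases i <;> simp

/-- The integer vector of a pair of bits. -/
def sv (σ : Fin 2 × Fin 2) : Fin 2 → ℤ := ![((σ.1 : ℕ) : ℤ), ((σ.2 : ℕ) : ℤ)]

lemma tterm_reidx (a b : Fin 2 → ℤ) (τ : Mat2) (hs : τ 1 0 = τ 0 1) (σ : Fin 2 × Fin 2)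
    (p q : Fin 2 → ℤ) :
    tterm (a, b) τ (reidx (σ, p, q)).1 * tterm (a, b) τ (reidx (σ, p, q)).2 =
      (-1) ^ ((sv σ 0 + a 0) * b 0 + (sv σ 1 + a 1) * b 1) *
      (tterm (sv σ + a, ![0, 0]) ((2 : ℂ) • τ) p * tterm (sv σ, ![0, 0]) ((2 : ℂ) • τ) q) := by
  have hm : ∀ k : ℤ, ((-1 : ℂ)) ^ k = Complex.exp ((Real.pi : ℂ) * Complex.I * k) := by
    intro k
    rw [← Complex.exp_pi_mul_I, ← Complex.exp_int_mul]
    congr 1; ring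
  have hp : Complex.exp ((Real.pi : ℂ) * Complex.I * (2 * ((p 0 : ℂ) * b 0 + p 1 * b 1))) = 1 := by
    rw [Complex.exp_eq_one_iff]
    refine ⟨p 0 * b 0 + p 1 * b 1, ?_⟩
    push_cast; ring
  rw [hm, ← mul_one (Complex.exp _ * _), ← hp]
  unfold tterm
  rw [← Complex.exp_add, ← Complex.exp_add, ← Complex.exp_add, ← Complex.exp_add]
  congr 1
  simp [Fin.sum_univ_two, reidx, sv, hs]
  ring

lemma theta_sq (a b : Fin 2 → ℤ) {τ : Mat2} (hτ : τ ∈ SiegelH2) :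
    theta (a, b) τ ^ 2 = ∑ σ : Fin 2 × Fin 2,
      (-1) ^ ((sv σ 0 + a 0) * b 0 + (sv σ 1 + a 1) * b 1) * (Θf (sv σ + a) τ * Θf (sv σ) τ) := by
  have h1 := summable_norm_tterm (a, b) hτ
  have h2 := fun κ => summable_norm_tterm κ (two_smul_mem hτ)
  have hsum := summable_mul_of_summable_norm h1 h1
  rw [sq, theta_eq, tsum_mul_tsum_of_summable_norm h1 h1, ← reidx.tsum_eq]
  have hsum' := (Equiv.summable_iff reidx).mpr hsum
  rw [Summable.tsum_prod (by exact hsum'), tsum_fintype]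
  refine Finset.sum_congr rfl fun σ _ => ?_
  unfold Θf
  rw [theta_eq, theta_eq, tsum_mul_tsum_of_summable_norm (h2 _) (h2 _), ← tsum_mul_left]
  refine tsum_congr fun pq => ?_
  exact tterm_reidx a b τ (siegel_symm hτ) σ pq.1 pq.2

lemma Θf_shift (ε e : Fin 2 → ℤ) (τ : Mat2) : Θf (ε + 2 * e) τ = Θf ε τ := by
  unfold Θf
  rw [theta_eq, theta_eq, ← (Equiv.addRight e).tsum_eq (tterm (ε, ![0, 0]) _)]
  refine tsum_congr fun n => ?_
  unfold tterm
  congr 1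
  simp [Fin.sum_univ_two]
  ring
/-- Coefficients of `θ⁴[δ]` in terms of `P₀,…,P₄`. -/
def Tc : Fin 10 → Fin 5 → ℂ :=
  ![![1, 1, 1, 1, 0], ![1, -1, 1, -1, 0], ![1, 1, -1, -1, 0], ![1, -1, -1, 1, 0],
    ![0, 2, 0, 0, 2], ![0, 2, 0, 0, -2], ![0, 0, 2, 0, 2], ![0, 0, 2, 0, -2],
    ![0, 0, 0, 2, 2], ![0, 0, 0, 2, -2]]

lemma Θf_20 (τ : Mat2) : Θf ![2, 0] τ = Θf ![0, 0] τ := by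
  rw [← Θf_shift ![0, 0] ![1, 0] τ]; congr 1; ext i; fin_cases i <;> simp

lemma Θf_21 (τ : Mat2) : Θf ![2, 1] τ = Θf ![0, 1] τ := by
  rw [← Θf_shift ![0, 1] ![1, 0] τ]; congr 1; ext i; fin_cases i <;> simp

lemma Θf_02 (τ : Mat2) : Θf ![0, 2] τ = Θf ![0, 0] τ := by
  rw [← Θf_shift ![0, 0] ![0, 1] τ]; congr 1; ext i; fin_cases i <;> simp

lemma Θf_12 (τ : Mat2) : Θf ![1, 2] τ = Θf ![1, 0] τ := by
  rw [← Θf_shift ![1, 0] ![0, 1] τ]; congr 1; ext i; fin_cases i <;> simp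

lemma Θf_22 (τ : Mat2) : Θf ![2, 2] τ = Θf ![0, 0] τ := by
  rw [← Θf_shift ![0, 0] ![1, 1] τ]; congr 1; ext i; fin_cases i <;> simp

lemma theta_four (d : Fin 10) {τ : Mat2} (hτ : τ ∈ SiegelH2) :
    theta (δev d) τ ^ 4 = ∑ m, Tc d m * Pv m τ := by
  have h4 : theta (δev d) τ ^ 4 = (theta ((δev d).1, (δev d).2) τ ^ 2) ^ 2 := by ring
  rw [h4, theta_sq _ _ hτ]
  fin_cases d <;>
  · simp [δev, Tc, Pv, Fintype.sum_prod_type, Fin.sum_univ_two, Fin.sum_univ_five, sv,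
      Θf_20, Θf_21, Θf_02, Θf_12, Θf_22, P0, P1, P2, P3, P4, Matrix.vecHead, Matrix.vecTail]
    try norm_num [zpow_ofNat, Θf_20, Θf_21, Θf_02, Θf_12, Θf_22]
    ring
/-- `θ⁴[δ]` as a function on the Siegel space. -/
noncomputable def Tf (d : Fin 10) : SiegelH2 → ℂ := fun τ => theta (δev d) τ.1 ^ 4

/-- `P_m` as a function on the Siegel space. -/
noncomputable def Pf (m : Fin 5) : SiegelH2 → ℂ := fun τ => Pv m τ.1

lemma Tf_apply (d : Fin 10) (τ : SiegelH2) :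
    Tf d τ = Tc d 0 * Pf 0 τ + Tc d 1 * Pf 1 τ + Tc d 2 * Pf 2 τ + Tc d 3 * Pf 3 τ
      + Tc d 4 * Pf 4 τ := by
  have := theta_four d τ.2
  rw [Fin.sum_univ_five] at this
  exact this

/-- Span of the even products. -/
noncomputable def Eev : Submodule ℂ (SiegelH2 → ℂ) := Submodule.span ℂ
      {g : SiegelH2 → ℂ | ∃ i j k : Fin 10,
        IsEvenChar (addChar (addChar (δev i) (δev j)) (δev k)) ∧
        g = fun τ : SiegelH2 =>
          theta (δev i) τ.1 ^ 4 * theta (δev j) τ.1 ^ 4 * theta (δev k) τ.1 ^ 4}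

/-- Span of all the products. -/
noncomputable def Eall : Submodule ℂ (SiegelH2 → ℂ) := Submodule.span ℂ
      {g : SiegelH2 → ℂ | ∃ i j k : Fin 10,
        g = fun τ : SiegelH2 =>
          theta (δev i) τ.1 ^ 4 * theta (δev j) τ.1 ^ 4 * theta (δev k) τ.1 ^ 4}

instance (κ : Char) : Decidable (IsEvenChar κ) := by unfold IsEvenChar; infer_instance

lemma mem_Eev (i j k : Fin 10) (h : IsEvenChar (addChar (addChar (δev i) (δev j)) (δev k))) :
    Tf i * Tf j * Tf k ∈ Eev := Submodule.subset_span ⟨i, j, k, h, rfl⟩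

/-- The linear span of `P₀,…,P₄`. -/
noncomputable def V : Submodule ℂ (SiegelH2 → ℂ) := Submodule.span ℂ (Set.range Pf)

lemma Tf_mem_V (d : Fin 10) : Tf d ∈ V := by
  have h : Tf d = ∑ m, Tc d m • Pf m := by
    funext τ
    simp [Tf_apply, Fin.sum_univ_five]
  rw [h]
  exact Submodule.sum_mem _ fun m _ => Submodule.smul_mem _ _ (Submodule.subset_span ⟨m, rfl⟩)

/-- Five of the `θ⁴` forming a basis. -/
def bs : Fin 5 → Fin 10 := ![3, 5, 7, 8, 9]

lemma V_le_T : V ≤ Submodule.span ℂ (Set.range fun m => Tf (bs m)) := by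
  have hm : ∀ m, Tf (bs m) ∈ Submodule.span ℂ (Set.range fun m => Tf (bs m)) :=
    fun m => Submodule.subset_span ⟨m, rfl⟩
  have key : ∀ m, ∃ c : Fin 5 → ℂ, Pf m = ∑ k, c k • Tf (bs k) := by
    intro m
    refine ⟨(![![1, 1/2, 1/2, 1/4, -3/4], ![0, 1/2, 0, 1/4, -1/4], ![0, 0, 1/2, 1/4, -1/4],
      ![0, 0, 0, 1/4, 1/4], ![0, 0, 0, 1/4, -1/4]] : Fin 5 → Fin 5 → ℂ) m, ?_⟩
    funext τ
    simp only [Finset.sum_apply, Pi.smul_apply, Fin.sum_univ_five, Tf_apply, smul_eq_mul]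
    fin_cases m <;> simp [bs, Tc] <;> ring
  rw [V, Submodule.span_le]
  rintro _ ⟨m, rfl⟩
  obtain ⟨c, hc⟩ := key m
  rw [SetLike.mem_coe, hc]
  exact Submodule.sum_mem _ fun k _ => Submodule.smul_mem _ _ (hm k)

lemma cert1 : Tf 3 * Tf 5 * Tf 9 ∈ Eev := by
  have : Tf 3 * Tf 5 * Tf 9 = Tf 0 * Tf 5 * Tf 9 - Tf 5 * Tf 5 * Tf 9 - Tf 5 * Tf 6 * Tf 9 := by
    funext τ
    simp only [Pi.mul_apply, Pi.sub_apply, Tf_apply]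
    simp [Tc]; ring
  rw [this]
  exact sub_mem (sub_mem (mem_Eev _ _ _ (by decide)) (mem_Eev _ _ _ (by decide)))
    (mem_Eev _ _ _ (by decide))

lemma cert2 : Tf 3 * Tf 7 * Tf 9 ∈ Eev := by
  have : Tf 3 * Tf 7 * Tf 9 = Tf 0 * Tf 7 * Tf 9 - Tf 7 * Tf 7 * Tf 9 - Tf 4 * Tf 7 * Tf 9 := by
    funext τ
    simp only [Pi.mul_apply, Pi.sub_apply, Tf_apply]
    simp [Tc]; ring
  rw [this]
  exact sub_mem (sub_mem (mem_Eev _ _ _ (by decide)) (mem_Eev _ _ _ (by decide)))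
    (mem_Eev _ _ _ (by decide))

lemma cert3 : Tf 5 * Tf 8 * Tf 9 ∈ Eev := by
  have : Tf 5 * Tf 8 * Tf 9 = Tf 0 * Tf 8 * Tf 9 - Tf 8 * Tf 8 * Tf 9 - Tf 1 * Tf 8 * Tf 9 := by
    funext τ
    simp only [Pi.mul_apply, Pi.sub_apply, Tf_apply]
    simp [Tc]; ring
  rw [this]
  exact sub_mem (sub_mem (mem_Eev _ _ _ (by decide)) (mem_Eev _ _ _ (by decide)))
    (mem_Eev _ _ _ (by decide))

lemma cert4 : Tf 7 * Tf 8 * Tf 9 ∈ Eev := by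
  have : Tf 7 * Tf 8 * Tf 9 = Tf 7 * Tf 8 * Tf 8 - Tf 4 * Tf 7 * Tf 8 + Tf 5 * Tf 7 * Tf 8 := by
    funext τ
    simp only [Pi.mul_apply, Pi.sub_apply, Pi.add_apply, Tf_apply]
    simp [Tc]; ring
  rw [this]
  exact add_mem (sub_mem (mem_Eev _ _ _ (by decide)) (mem_Eev _ _ _ (by decide)))
    (mem_Eev _ _ _ (by decide))

/-- `x` is a rearrangement of `y`. -/
def Perm3 {α : Type} (x y : α × α × α) : Prop :=
  x = y ∨ x = (y.1, y.2.2, y.2.1) ∨ x = (y.2.1, y.1, y.2.2) ∨ x = (y.2.1, y.2.2, y.1) ∨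
    x = (y.2.2, y.1, y.2.1) ∨ x = (y.2.2, y.2.1, y.1)

instance {α : Type} [DecidableEq α] (x y : α × α × α) : Decidable (Perm3 x y) := by
  unfold Perm3; infer_instance

lemma Perm3.mul {α : Type} {x y : α × α × α} (h : Perm3 x y) (f : α → SiegelH2 → ℂ) :
    f x.1 * f x.2.1 * f x.2.2 = f y.1 * f y.2.1 * f y.2.2 := by
  rcases h with h | h | h | h | h | h <;> subst h <;> simp only <;> ring

lemma basis_mem (i j k : Fin 5) : Tf (bs i) * Tf (bs j) * Tf (bs k) ∈ Eev := by
  have h : ∀ i j k : Fin 5,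
      IsEvenChar (addChar (addChar (δev (bs i)) (δev (bs j))) (δev (bs k))) ∨
      Perm3 (bs i, bs j, bs k) (3, 5, 9) ∨ Perm3 (bs i, bs j, bs k) (3, 7, 9) ∨
      Perm3 (bs i, bs j, bs k) (5, 8, 9) ∨ Perm3 (bs i, bs j, bs k) (7, 8, 9) := by
    decide +kernel
  rcases h i j k with h | h | h | h | h
  · exact mem_Eev _ _ _ h
  · have e := h.mul Tf; simp only at e; rw [e]; exact cert1
  · have e := h.mul Tf; simp only at e; rw [e]; exact cert2
  · have e := h.mul Tf; simp only at e; rw [e]; exact cert3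
  · have e := h.mul Tf; simp only at e; rw [e]; exact cert4

lemma span_cube_le {ι : Type} (f : ι → SiegelH2 → ℂ) (E : Submodule ℂ (SiegelH2 → ℂ))
    (h : ∀ i j k, f i * f j * f k ∈ E) :
    Submodule.span ℂ (Set.range f) * Submodule.span ℂ (Set.range f) *
      Submodule.span ℂ (Set.range f) ≤ E := by
  rw [Submodule.span_mul_span, Submodule.span_mul_span, Submodule.span_le]
  rintro _ ⟨_, ⟨_, ⟨i, rfl⟩, _, ⟨j, rfl⟩, rfl⟩, _, ⟨k, rfl⟩, rfl⟩
  exact h i j k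

lemma V3_le : V * V * V ≤ Eev :=
  (mul_le_mul' (mul_le_mul' V_le_T V_le_T) V_le_T).trans
    (span_cube_le _ _ basis_mem)

lemma Eev_le : Eev ≤ Eall := by
  apply Submodule.span_mono
  rintro g ⟨i, j, k, -, h⟩
  exact ⟨i, j, k, h⟩

lemma Eall_le : Eall ≤ V * V * V := by
  unfold Eall
  rw [Submodule.span_le]
  rintro g ⟨i, j, k, h⟩
  have : g = Tf i * Tf j * Tf k := h
  rw [this]
  exact Submodule.mul_mem_mul (Submodule.mul_mem_mul (Tf_mem_V i) (Tf_mem_V j)) (Tf_mem_V k)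

lemma Eev_eq : Eev = Eall := le_antisymm Eev_le (Eall_le.trans V3_le)

lemma Eall_eq : Eall = V * V * V := le_antisymm Eall_le (V3_le.trans Eev_le)

lemma Pf_mem (i j k : Fin 5) : Pf i * Pf j * Pf k ∈ V * V * V :=
  Submodule.mul_mem_mul (Submodule.mul_mem_mul (Submodule.subset_span ⟨i, rfl⟩)
    (Submodule.subset_span ⟨j, rfl⟩)) (Submodule.subset_span ⟨k, rfl⟩)

lemma Psi_mem : (fun τ : SiegelH2 => Ψ6 τ.1) ∈ Eev := by
  rw [Eev_eq, Eall_eq]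
  have : (fun τ : SiegelH2 => Ψ6 τ.1) = Pf 0 * Pf 0 * Pf 0
      - (9 : ℂ) • (Pf 0 * Pf 1 * Pf 1 + Pf 0 * Pf 2 * Pf 2 + Pf 0 * Pf 3 * Pf 3
        - (4 : ℂ) • (Pf 0 * Pf 4 * Pf 4)) + (54 : ℂ) • (Pf 1 * Pf 2 * Pf 3) := by
    funext τ
    simp [Ψ6, Pf, Pv]
    ring
  rw [this]
  refine add_mem (sub_mem (Pf_mem _ _ _) (Submodule.smul_mem _ _ (sub_mem (add_mem (add_mem
    (Pf_mem _ _ _) (Pf_mem _ _ _)) (Pf_mem _ _ _)) (Submodule.smul_mem _ _ (Pf_mem _ _ _)))))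
    (Submodule.smul_mem _ _ (Pf_mem _ _ _))

/-- The 35 sorted triples. -/
def tr : Fin 35 → Fin 5 × Fin 5 × Fin 5 :=
  ![(0,0,0), (0,0,1), (0,0,2), (0,0,3), (0,0,4), (0,1,1), (0,1,2), (0,1,3), (0,1,4), (0,2,2),
    (0,2,3), (0,2,4), (0,3,3), (0,3,4), (0,4,4), (1,1,1), (1,1,2), (1,1,3), (1,1,4), (1,2,2),
    (1,2,3), (1,2,4), (1,3,3), (1,3,4), (1,4,4), (2,2,2), (2,2,3), (2,2,4), (2,3,3), (2,3,4),
    (2,4,4), (3,3,3), (3,3,4), (3,4,4), (4,4,4)]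

/-- The 35 cubic monomials in the `P`. -/
noncomputable def mono (t : Fin 35) : SiegelH2 → ℂ := Pf (tr t).1 * Pf (tr t).2.1 * Pf (tr t).2.2

lemma V3_eq : V * V * V = Submodule.span ℂ (Set.range mono) := by
  apply le_antisymm
  · apply span_cube_le
    intro i j k
    have h : ∀ i j k : Fin 5, ∃ t, Perm3 (i, j, k) (tr t) := by decide +kernel
    obtain ⟨t, ht⟩ := h i j k
    have := ht.mul Pf
    simp only at this
    rw [this]
    exact Submodule.subset_span ⟨t, rfl⟩
  · rw [Submodule.span_le]
    rintro _ ⟨t, rfl⟩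
    exact Pf_mem _ _ _
open Filter Topology

/-- A family of points of the Siegel space going to the cusp as `r → ∞`. -/
noncomputable def tau (r z : ℝ) : Mat2 :=
  !![Complex.I * ((2 * r / Real.pi : ℝ) : ℂ), (z : ℂ); (z : ℂ), Complex.I * ((8 * r / Real.pi : ℝ) : ℂ)]

lemma tau_mem {r : ℝ} (hr : 0 < r) (z : ℝ) : tau r z ∈ SiegelH2 := by
  constructor
  · ext i j; fin_cases i <;> fin_cases j <;> simp [tau]
  · have : (tau r z).map Complex.im = Matrix.diagonal ![2 * r / Real.pi, 8 * r / Real.pi] := by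
      ext i j
      fin_cases i <;> fin_cases j <;>
        simp only [tau, Matrix.map_apply, Matrix.of_apply, Matrix.diagonal_apply] <;>
        simp [-Complex.ofReal_div, -Complex.ofReal_mul]
    rw [this, Matrix.posDef_diagonal_iff]
    have := Real.pi_pos
    intro i
    fin_cases i <;> simp <;> positivity

/-- The exponent of the (normalised) theta series term. -/
def Kx (ε n : Fin 2 → ℤ) : ℤ :=
  ((2 * n 0 + ε 0) ^ 2 - ε 0) + 4 * ((2 * n 1 + ε 1) ^ 2 - ε 1)

/-- The phase of the theta series term. -/
noncomputable def ph (z : ℝ) (ε n : Fin 2 → ℤ) : ℂ :=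
  Complex.exp (((Real.pi * z * ((2 * n 0 + ε 0 : ℤ) * (2 * n 1 + ε 1 : ℤ)) : ℝ) : ℂ) * Complex.I)

lemma sq_facts {e : ℤ} (he : e = 0 ∨ e = 1) (n : ℤ) :
    0 ≤ (2 * n + e) ^ 2 - e ∧ ((2 * n + e) ^ 2 - e = 0 → n = 0 ∨ n = -1) := by
  rcases he with rfl | rfl
  · refine ⟨by nlinarith [sq_nonneg n], fun h => ?_⟩
    have : n * n = 0 := by nlinarith
    left; simpa using this
  · constructor
    · rcases le_or_gt 0 n with h | h <;> nlinarith
    · intro h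
      have : n * (n + 1) = 0 := by nlinarith
      rcases mul_eq_zero.mp this with h | h
      · left; exact h
      · right; omega

lemma Kx_nonneg {ε : Fin 2 → ℤ} (hε : ∀ i, ε i = 0 ∨ ε i = 1) (n : Fin 2 → ℤ) : 0 ≤ Kx ε n := by
  have h0 := (sq_facts (hε 0) (n 0)).1
  have h1 := (sq_facts (hε 1) (n 1)).1
  unfold Kx; linarith

lemma tterm_tau (ε : Fin 2 → ℤ) (r z : ℝ) (n : Fin 2 → ℤ) :
    (Real.exp ((ε 0 + 4 * ε 1) * r) : ℂ) * tterm (ε, ![0, 0]) ((2 : ℂ) • tau r z) n =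
      (Real.exp (-r * Kx ε n) : ℂ) * ph z ε n := by
  unfold tterm ph
  rw [Complex.ofReal_exp, Complex.ofReal_exp, ← Complex.exp_add, ← Complex.exp_add]
  congr 1
  have hpi : (Real.pi : ℂ) ≠ 0 := by exact_mod_cast Real.pi_ne_zero
  simp [Fin.sum_univ_two, tau, Kx]
  field_simp
  ring_nf
  simp only [Complex.I_sq]
  ring

lemma norm_ph (z : ℝ) (ε n : Fin 2 → ℤ) : ‖ph z ε n‖ = 1 := Complex.norm_exp_ofReal_mul_I _

lemma Θ_lim {ε : Fin 2 → ℤ} (hε : ∀ i, ε i = 0 ∨ ε i = 1) (z : ℝ) :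
    Tendsto (fun r : ℝ => (Real.exp ((ε 0 + 4 * ε 1) * r) : ℂ) * Θf ε (tau r z)) atTop
      (𝓝 (∑' n, if Kx ε n = 0 then ph z ε n else 0)) := by
  have heq : (fun r : ℝ => (Real.exp ((ε 0 + 4 * ε 1) * r) : ℂ) * Θf ε (tau r z)) =
      fun r => ∑' n, (Real.exp (-r * Kx ε n) : ℂ) * ph z ε n := by
    funext r
    unfold Θf
    rw [theta_eq, ← tsum_mul_left]
    exact tsum_congr fun n => tterm_tau ε r z n
  rw [heq]
  refine tendsto_tsum_of_dominated_convergence (bound := fun n => Real.exp (-(Kx ε n : ℝ))) ?_ ?_ ?_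
  · have hs := summable_gauss2 ((ε 0 : ℝ) / 2) ((ε 1 : ℝ) / 2) (4 / Real.pi) (16 / Real.pi)
      (by have := Real.pi_pos; positivity) (by have := Real.pi_pos; positivity)
    refine (hs.mul_left (Real.exp (ε 0 + 4 * ε 1))).congr fun n => ?_
    rw [← Real.exp_add, ← Real.exp_add]
    congr 1
    have := Real.pi_ne_zero
    unfold Kx
    push_cast
    field_simp
    ring
  · intro n
    have hK := Kx_nonneg hε n
    by_cases h : Kx ε n = 0
    · simp [h]
    · rw [if_neg h]
      have hK' : (0 : ℝ) < Kx ε n := by exact_mod_cast lt_of_le_of_ne hK (Ne.symm h)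
      have h1 : Tendsto (fun r : ℝ => Real.exp (-r * Kx ε n)) atTop (𝓝 0) := by
        apply Real.tendsto_exp_atBot.comp
        have := (tendsto_id (α := ℝ) (x := atTop)).const_mul_atTop hK'
        refine (tendsto_neg_atTop_atBot.comp this).congr fun r => ?_
        simp; ring
      have h2 : Tendsto (fun r : ℝ => (Real.exp (-r * Kx ε n) : ℂ)) atTop (𝓝 0) := by
        have := (Complex.continuous_ofReal.tendsto 0).comp h1
        simpa [Function.comp_def] using this
      simpa using h2.mul_const (ph z ε n)
  · filter_upwards [eventually_ge_atTop 1] with r hr n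
    rw [norm_mul, norm_ph, mul_one, Complex.norm_real, Real.norm_eq_abs, Real.abs_exp]
    apply Real.exp_le_exp.mpr
    have hK : (0 : ℝ) ≤ Kx ε n := by exact_mod_cast Kx_nonneg hε n
    nlinarith

lemma Kx_tsum {ε : Fin 2 → ℤ} (hε : ∀ i, ε i = 0 ∨ ε i = 1) (z : ℝ) :
    ∑' n, (if Kx ε n = 0 then ph z ε n else 0) =
      ∑ n ∈ ({![0, 0], ![-1, 0], ![0, -1], ![-1, -1]} : Finset (Fin 2 → ℤ)),
        if Kx ε n = 0 then ph z ε n else 0 := by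
  apply tsum_eq_sum
  intro n hn
  rw [if_neg]
  intro hK
  apply hn
  have h0 := sq_facts (hε 0) (n 0)
  have h1 := sq_facts (hε 1) (n 1)
  unfold Kx at hK
  have e0 := h0.2 (by linarith [h0.1, h1.1])
  have e1 := h1.2 (by linarith [h0.1, h1.1])
  have hn : n = ![n 0, n 1] := by ext i; fin_cases i <;> rfl
  rw [hn]
  rcases e0 with e0 | e0 <;> rcases e1 with e1 | e1 <;> simp [e0, e1]

lemma sum_four (f : (Fin 2 → ℤ) → ℂ) :
    ∑ n ∈ ({![0, 0], ![-1, 0], ![0, -1], ![-1, -1]} : Finset (Fin 2 → ℤ)), f n =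
      f ![0, 0] + f ![-1, 0] + f ![0, -1] + f ![-1, -1] := by
  rw [Finset.sum_insert (by decide), Finset.sum_insert (by decide), Finset.sum_insert (by decide),
    Finset.sum_singleton]
  ring

lemma Θ00_lim (z : ℝ) : Tendsto (fun r : ℝ => Θf ![0, 0] (tau r z)) atTop (𝓝 1) := by
  have hε : ∀ i, (![0, 0] : Fin 2 → ℤ) i = 0 ∨ (![0, 0] : Fin 2 → ℤ) i = 1 := by decide
  have h := Θ_lim hε z
  rw [Kx_tsum hε, sum_four] at h
  simpa [Kx, ph] using h

lemma Θ10_lim (z : ℝ) : Tendsto (fun r : ℝ => (Real.exp r : ℂ) * Θf ![1, 0] (tau r z)) atTop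
    (𝓝 2) := by
  have hε : ∀ i, (![1, 0] : Fin 2 → ℤ) i = 0 ∨ (![1, 0] : Fin 2 → ℤ) i = 1 := by decide
  have h := Θ_lim hε z
  rw [Kx_tsum hε, sum_four] at h
  norm_num [Kx, ph] at h
  simpa using h

lemma Θ01_lim (z : ℝ) : Tendsto (fun r : ℝ => (Real.exp (4 * r) : ℂ) * Θf ![0, 1] (tau r z)) atTop
    (𝓝 2) := by
  have hε : ∀ i, (![0, 1] : Fin 2 → ℤ) i = 0 ∨ (![0, 1] : Fin 2 → ℤ) i = 1 := by decide
  have h := Θ_lim hε z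
  rw [Kx_tsum hε, sum_four] at h
  norm_num [Kx, ph] at h
  simpa using h

lemma Θ11_lim (z : ℝ) : Tendsto (fun r : ℝ => (Real.exp (5 * r) : ℂ) * Θf ![1, 1] (tau r z)) atTop
    (𝓝 (4 * Real.cos (Real.pi * z))) := by
  have hε : ∀ i, (![1, 1] : Fin 2 → ℤ) i = 0 ∨ (![1, 1] : Fin 2 → ℤ) i = 1 := by decide
  have h := Θ_lim hε z
  rw [Kx_tsum hε, sum_four] at h
  have hv : (4 * Real.cos (Real.pi * z) : ℂ) =
      2 * (Complex.exp (Real.pi * z * Complex.I) + Complex.exp (-(Real.pi * z * Complex.I))) := by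
    rw [Complex.ofReal_cos, Complex.cos]
    push_cast
    ring_nf
  rw [hv]
  norm_num [Kx, ph] at h
  convert h using 2
  · push_cast; ring
  · ring
/-- Weights of the `P_m`. -/
def wP : Fin 5 → ℕ := ![0, 8, 2, 10, 10]

/-- Leading coefficients of the `P_m`. -/
noncomputable def LP (v : ℝ) : Fin 5 → ℂ := ![1, 8, 8, 32 * ((v : ℂ) ^ 2 + 1), 64 * (v : ℂ)]

lemma P_lim (z : ℝ) (m : Fin 5) :
    Tendsto (fun r : ℝ => (Real.exp r : ℂ) ^ wP m * Pv m (tau r z)) atTop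
      (𝓝 (LP (Real.cos (Real.pi * z)) m)) := by
  have ha := Θ00_lim z
  have hb := Θ01_lim z
  have hc := Θ10_lim z
  have hd := Θ11_lim z
  have he : Tendsto (fun r : ℝ => ((Real.exp (-r) : ℝ) : ℂ)) atTop (𝓝 0) := by
    have := (Complex.continuous_ofReal.tendsto 0).comp
      (Real.tendsto_exp_atBot.comp tendsto_neg_atTop_atBot)
    simpa [Function.comp_def] using this
  have hE : ∀ r : ℝ, ((Real.exp (-r) : ℝ) : ℂ) = (Real.exp r : ℂ)⁻¹ := by
    intro r; rw [Real.exp_neg]; push_cast; rfl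
  have h4 : ∀ r : ℝ, ((Real.exp (4 * r) : ℝ) : ℂ) = (Real.exp r : ℂ) ^ 4 := by
    intro r; rw [← Complex.ofReal_pow, ← Real.exp_nat_mul]; norm_num
  have h5 : ∀ r : ℝ, ((Real.exp (5 * r) : ℝ) : ℂ) = (Real.exp r : ℂ) ^ 5 := by
    intro r; rw [← Complex.ofReal_pow, ← Real.exp_nat_mul]; norm_num
  have hne : ∀ r : ℝ, (Real.exp r : ℂ) ≠ 0 := by
    intro r; exact_mod_cast (Real.exp_pos r).ne'
  simp only [hE] at he
  simp only [h4] at hb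
  simp only [h5] at hd
  fin_cases m
  · have := (((ha.pow 4).add (((he.pow 4).mul hb).pow 4)).add ((he.mul hc).pow 4)).add
      (((he.pow 5).mul hd).pow 4)
    refine (this.congr fun r => ?_).trans (by simp [LP])
    have := hne r
    simp [wP, Pv, P0, -Complex.ofReal_exp]
  · have := (((ha.pow 2).mul (hb.pow 2)).add ((he.pow 4).mul ((hc.pow 2).mul (hd.pow 2)))).const_mul 2
    refine (this.congr fun r => ?_).trans (by norm_num [LP])
    have := hne r
    simp [wP, Pv, P1, -Complex.ofReal_exp]
    field_simp
  · have := (((ha.pow 2).mul (hc.pow 2)).add ((he.pow 16).mul ((hb.pow 2).mul (hd.pow 2)))).const_mul 2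
    refine (this.congr fun r => ?_).trans (by norm_num [LP])
    have := hne r
    simp [wP, Pv, P2, -Complex.ofReal_exp]
    field_simp
  · have := (((ha.pow 2).mul (hd.pow 2)).add ((hb.pow 2).mul (hc.pow 2))).const_mul 2
    refine (this.congr fun r => ?_).trans (le_of_eq (congrArg _ ?_))
    · simp [wP, Pv, P3, -Complex.ofReal_exp]
      ring
    · simp [LP]; ring
  · have := ((ha.mul hb).mul (hc.mul hd)).const_mul 4
    refine (this.congr fun r => ?_).trans (le_of_eq (congrArg _ ?_))
    · simp [wP, Pv, P4, -Complex.ofReal_exp]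
      ring
    · simp [LP]; ring

/-- Weights of the monomials. -/
def wt (t : Fin 35) : ℕ := wP (tr t).1 + wP (tr t).2.1 + wP (tr t).2.2

/-- Leading coefficients of the monomials. -/
noncomputable def LM (v : ℝ) (t : Fin 35) : ℂ := LP v (tr t).1 * LP v (tr t).2.1 * LP v (tr t).2.2

lemma lead (g : Fin 35 → ℂ) (h : ∑ t, g t • mono t = 0) (N : ℕ) (hlt : ∀ t, wt t < N → g t = 0)
    (v : ℝ) (h1 : -1 ≤ v) (h2 : v ≤ 1) :
    ∑ t ∈ Finset.univ.filter (fun t => wt t = N), g t * LM v t = 0 := by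
  obtain ⟨z, hz⟩ : ∃ z : ℝ, Real.cos (Real.pi * z) = v := by
    refine ⟨Real.arccos v / Real.pi, ?_⟩
    rw [mul_div_cancel₀ _ Real.pi_ne_zero, Real.cos_arccos h1 h2]
  have hM : ∀ t, Tendsto (fun r : ℝ => (Real.exp r : ℂ) ^ wt t *
      (Pv (tr t).1 (tau r z) * Pv (tr t).2.1 (tau r z) * Pv (tr t).2.2 (tau r z))) atTop
      (𝓝 (LM v t)) := by
    intro t
    have := ((P_lim z (tr t).1).mul (P_lim z (tr t).2.1)).mul (P_lim z (tr t).2.2)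
    rw [hz] at this
    refine this.congr fun r => ?_
    unfold wt
    ring
  have he : Tendsto (fun r : ℝ => (Real.exp r : ℂ)⁻¹) atTop (𝓝 0) := by
    have := (Complex.continuous_ofReal.tendsto 0).comp
      (Real.tendsto_exp_atBot.comp tendsto_neg_atTop_atBot)
    simpa [Function.comp_def, Complex.exp_neg] using this
  have hne : ∀ r : ℝ, (Real.exp r : ℂ) ≠ 0 := by
    intro r; exact_mod_cast (Real.exp_pos r).ne'
  have hT : ∀ t, Tendsto (fun r : ℝ => (Real.exp r : ℂ) ^ N * (g t *
      (Pv (tr t).1 (tau r z) * Pv (tr t).2.1 (tau r z) * Pv (tr t).2.2 (tau r z)))) atTop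
      (𝓝 (if wt t = N then g t * LM v t else 0)) := by
    intro t
    rcases lt_trichotomy (wt t) N with hw | hw | hw
    · simp [hlt t hw, hw.ne]
    · rw [if_pos hw]
      refine ((hM t).const_mul (g t)).congr fun r => ?_
      rw [hw]; ring
    · rw [if_neg hw.ne']
      obtain ⟨k, hk⟩ := Nat.exists_eq_add_of_lt hw
      have := ((he.pow (k + 1)).mul (hM t)).const_mul (g t)
      simp only [ne_eq, Nat.add_eq_zero_iff, one_ne_zero, and_false, not_false_eq_true, zero_pow,
        zero_mul, mul_zero] at this
      refine this.congr fun r => ?_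
      have := hne r
      have hh : (Real.exp r : ℂ)⁻¹ ^ (k + 1) * (Real.exp r : ℂ) ^ (k + 1) = 1 := by
        rw [← mul_pow, inv_mul_cancel₀ this, one_pow]
      rw [hk, add_assoc, pow_add _ N (k + 1)]
      linear_combination (g t * (Real.exp r : ℂ) ^ N * (Pv (tr t).1 (tau r z) *
        Pv (tr t).2.1 (tau r z) * Pv (tr t).2.2 (tau r z))) * hh
  have hS := tendsto_finsetSum Finset.univ fun t _ => hT t
  rw [← Finset.sum_filter] at hS
  refine tendsto_nhds_unique hS (tendsto_const_nhds.congr' ?_)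
  filter_upwards [eventually_gt_atTop 0] with r hr
  have := congrFun h ⟨tau r z, tau_mem hr z⟩
  simp only [Finset.sum_apply, Pi.smul_apply, smul_eq_mul, mono, Pi.mul_apply, Pi.zero_apply] at this
  rw [← Finset.mul_sum]
  change _ = _ * ∑ t, g t * (Pf (tr t).1 ⟨tau r z, tau_mem hr z⟩ * Pf (tr t).2.1 ⟨tau r z, tau_mem hr z⟩
    * Pf (tr t).2.2 ⟨tau r z, tau_mem hr z⟩)
  rw [this, mul_zero]

/-- Vanishing of all leading combinations of weight `N`. -/
def Van (g : Fin 35 → ℂ) (N : ℕ) : Prop := ∀ v : ℝ, -1 ≤ v → v ≤ 1 →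
    ∑ t ∈ Finset.univ.filter (fun t => wt t = N), g t * LM v t = 0

lemma LP0 (v : ℝ) : LP v 0 = 1 := rfl
lemma LP1 (v : ℝ) : LP v 1 = 8 := rfl
lemma LP2 (v : ℝ) : LP v 2 = 8 := rfl
lemma LP3 (v : ℝ) : LP v 3 = 32 * ((v : ℂ) ^ 2 + 1) := rfl
lemma LP4 (v : ℝ) : LP v 4 = 64 * (v : ℂ) := rfl

lemma van0 (g : Fin 35 → ℂ) (h : Van g 0) : ∀ t, wt t = 0 → g t = 0 := by
  have hf : Finset.univ.filter (fun t => wt t = 0) = {0} := by decide +kernel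
  have e : ∀ v : ℝ, -1 ≤ v → v ≤ 1 → g 0 * (LP v 0 * LP v 0 * LP v 0) = 0 := by
    intro v a b
    have := h v a b
    rw [hf, Finset.sum_singleton] at this
    exact this
  have h0 := e 1 (by norm_num) (by norm_num)
  norm_num [LP0, LP1, LP2, LP3, LP4] at h0
  have hz : g 0 = 0 := by clear e h hf; grind
  intro t ht
  have hm : t ∈ ({0} : Finset (Fin 35)) := by rw [← hf]; simpa using ht
  simp only [Finset.mem_insert, Finset.mem_singleton] at hm
  rcases hm with rfl <;> tauto

lemma van2 (g : Fin 35 → ℂ) (h : Van g 2) : ∀ t, wt t = 2 → g t = 0 := by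
  have hf : Finset.univ.filter (fun t => wt t = 2) = {2} := by decide +kernel
  have e : ∀ v : ℝ, -1 ≤ v → v ≤ 1 → g 2 * (LP v 0 * LP v 0 * LP v 2) = 0 := by
    intro v a b
    have := h v a b
    rw [hf, Finset.sum_singleton] at this
    exact this
  have h0 := e 1 (by norm_num) (by norm_num)
  norm_num [LP0, LP1, LP2, LP3, LP4] at h0
  have hz : g 2 = 0 := by clear e h hf; grind
  intro t ht
  have hm : t ∈ ({2} : Finset (Fin 35)) := by rw [← hf]; simpa using ht
  simp only [Finset.mem_insert, Finset.mem_singleton] at hm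
  rcases hm with rfl <;> tauto

lemma van4 (g : Fin 35 → ℂ) (h : Van g 4) : ∀ t, wt t = 4 → g t = 0 := by
  have hf : Finset.univ.filter (fun t => wt t = 4) = {9} := by decide +kernel
  have e : ∀ v : ℝ, -1 ≤ v → v ≤ 1 → g 9 * (LP v 0 * LP v 2 * LP v 2) = 0 := by
    intro v a b
    have := h v a b
    rw [hf, Finset.sum_singleton] at this
    exact this
  have h0 := e 1 (by norm_num) (by norm_num)
  norm_num [LP0, LP1, LP2, LP3, LP4] at h0
  have hz : g 9 = 0 := by clear e h hf; grind
  intro t ht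
  have hm : t ∈ ({9} : Finset (Fin 35)) := by rw [← hf]; simpa using ht
  simp only [Finset.mem_insert, Finset.mem_singleton] at hm
  rcases hm with rfl <;> tauto

lemma van6 (g : Fin 35 → ℂ) (h : Van g 6) : ∀ t, wt t = 6 → g t = 0 := by
  have hf : Finset.univ.filter (fun t => wt t = 6) = {25} := by decide +kernel
  have e : ∀ v : ℝ, -1 ≤ v → v ≤ 1 → g 25 * (LP v 2 * LP v 2 * LP v 2) = 0 := by
    intro v a b
    have := h v a b
    rw [hf, Finset.sum_singleton] at this
    exact this
  have h0 := e 1 (by norm_num) (by norm_num)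
  norm_num [LP0, LP1, LP2, LP3, LP4] at h0
  have hz : g 25 = 0 := by clear e h hf; grind
  intro t ht
  have hm : t ∈ ({25} : Finset (Fin 35)) := by rw [← hf]; simpa using ht
  simp only [Finset.mem_insert, Finset.mem_singleton] at hm
  rcases hm with rfl <;> tauto

lemma van8 (g : Fin 35 → ℂ) (h : Van g 8) : ∀ t, wt t = 8 → g t = 0 := by
  have hf : Finset.univ.filter (fun t => wt t = 8) = {1} := by decide +kernel
  have e : ∀ v : ℝ, -1 ≤ v → v ≤ 1 → g 1 * (LP v 0 * LP v 0 * LP v 1) = 0 := by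
    intro v a b
    have := h v a b
    rw [hf, Finset.sum_singleton] at this
    exact this
  have h0 := e 1 (by norm_num) (by norm_num)
  norm_num [LP0, LP1, LP2, LP3, LP4] at h0
  have hz : g 1 = 0 := by clear e h hf; grind
  intro t ht
  have hm : t ∈ ({1} : Finset (Fin 35)) := by rw [← hf]; simpa using ht
  simp only [Finset.mem_insert, Finset.mem_singleton] at hm
  rcases hm with rfl <;> tauto

lemma van10 (g : Fin 35 → ℂ) (h : Van g 10) : ∀ t, wt t = 10 → g t = 0 := by
  have hf : Finset.univ.filter (fun t => wt t = 10) = {3, 4, 6} := by decide +kernel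
  have e : ∀ v : ℝ, -1 ≤ v → v ≤ 1 → g 3 * (LP v 0 * LP v 0 * LP v 3) +
      (g 4 * (LP v 0 * LP v 0 * LP v 4) +
      (g 6 * (LP v 0 * LP v 1 * LP v 2))) = 0 := by
    intro v a b
    have := h v a b
    rw [hf, Finset.sum_insert (by decide), Finset.sum_insert (by decide), Finset.sum_singleton] at this
    exact this
  have h0 := e 0 (by norm_num) (by norm_num)
  have h1 := e 1 (by norm_num) (by norm_num)
  have h2 := e (-1) (by norm_num) (by norm_num)
  norm_num [LP0, LP1, LP2, LP3, LP4] at h0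
  norm_num [LP0, LP1, LP2, LP3, LP4] at h1
  norm_num [LP0, LP1, LP2, LP3, LP4] at h2
  have hz : g 3 = 0 ∧ g 4 = 0 ∧ g 6 = 0 := by clear e h hf; grind
  intro t ht
  have hm : t ∈ ({3, 4, 6} : Finset (Fin 35)) := by rw [← hf]; simpa using ht
  simp only [Finset.mem_insert, Finset.mem_singleton] at hm
  rcases hm with rfl | rfl | rfl <;> tauto

lemma van12 (g : Fin 35 → ℂ) (h : Van g 12) : ∀ t, wt t = 12 → g t = 0 := by
  have hf : Finset.univ.filter (fun t => wt t = 12) = {10, 11, 19} := by decide +kernel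
  have e : ∀ v : ℝ, -1 ≤ v → v ≤ 1 → g 10 * (LP v 0 * LP v 2 * LP v 3) +
      (g 11 * (LP v 0 * LP v 2 * LP v 4) +
      (g 19 * (LP v 1 * LP v 2 * LP v 2))) = 0 := by
    intro v a b
    have := h v a b
    rw [hf, Finset.sum_insert (by decide), Finset.sum_insert (by decide), Finset.sum_singleton] at this
    exact this
  have h0 := e 0 (by norm_num) (by norm_num)
  have h1 := e 1 (by norm_num) (by norm_num)
  have h2 := e (-1) (by norm_num) (by norm_num)
  norm_num [LP0, LP1, LP2, LP3, LP4] at h0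
  norm_num [LP0, LP1, LP2, LP3, LP4] at h1
  norm_num [LP0, LP1, LP2, LP3, LP4] at h2
  have hz : g 10 = 0 ∧ g 11 = 0 ∧ g 19 = 0 := by clear e h hf; grind
  intro t ht
  have hm : t ∈ ({10, 11, 19} : Finset (Fin 35)) := by rw [← hf]; simpa using ht
  simp only [Finset.mem_insert, Finset.mem_singleton] at hm
  rcases hm with rfl | rfl | rfl <;> tauto

lemma van14 (g : Fin 35 → ℂ) (h : Van g 14) : ∀ t, wt t = 14 → g t = 0 := by
  have hf : Finset.univ.filter (fun t => wt t = 14) = {26, 27} := by decide +kernel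
  have e : ∀ v : ℝ, -1 ≤ v → v ≤ 1 → g 26 * (LP v 2 * LP v 2 * LP v 3) +
      (g 27 * (LP v 2 * LP v 2 * LP v 4)) = 0 := by
    intro v a b
    have := h v a b
    rw [hf, Finset.sum_insert (by decide), Finset.sum_singleton] at this
    exact this
  have h0 := e 0 (by norm_num) (by norm_num)
  have h1 := e 1 (by norm_num) (by norm_num)
  have h2 := e (-1) (by norm_num) (by norm_num)
  norm_num [LP0, LP1, LP2, LP3, LP4] at h0
  norm_num [LP0, LP1, LP2, LP3, LP4] at h1
  norm_num [LP0, LP1, LP2, LP3, LP4] at h2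
  have hz : g 26 = 0 ∧ g 27 = 0 := by clear e h hf; grind
  intro t ht
  have hm : t ∈ ({26, 27} : Finset (Fin 35)) := by rw [← hf]; simpa using ht
  simp only [Finset.mem_insert, Finset.mem_singleton] at hm
  rcases hm with rfl | rfl <;> tauto

lemma van16 (g : Fin 35 → ℂ) (h : Van g 16) : ∀ t, wt t = 16 → g t = 0 := by
  have hf : Finset.univ.filter (fun t => wt t = 16) = {5} := by decide +kernel
  have e : ∀ v : ℝ, -1 ≤ v → v ≤ 1 → g 5 * (LP v 0 * LP v 1 * LP v 1) = 0 := by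
    intro v a b
    have := h v a b
    rw [hf, Finset.sum_singleton] at this
    exact this
  have h0 := e 1 (by norm_num) (by norm_num)
  norm_num [LP0, LP1, LP2, LP3, LP4] at h0
  have hz : g 5 = 0 := by clear e h hf; grind
  intro t ht
  have hm : t ∈ ({5} : Finset (Fin 35)) := by rw [← hf]; simpa using ht
  simp only [Finset.mem_insert, Finset.mem_singleton] at hm
  rcases hm with rfl <;> tauto

lemma van18 (g : Fin 35 → ℂ) (h : Van g 18) : ∀ t, wt t = 18 → g t = 0 := by
  have hf : Finset.univ.filter (fun t => wt t = 18) = {7, 8, 16} := by decide +kernel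
  have e : ∀ v : ℝ, -1 ≤ v → v ≤ 1 → g 7 * (LP v 0 * LP v 1 * LP v 3) +
      (g 8 * (LP v 0 * LP v 1 * LP v 4) +
      (g 16 * (LP v 1 * LP v 1 * LP v 2))) = 0 := by
    intro v a b
    have := h v a b
    rw [hf, Finset.sum_insert (by decide), Finset.sum_insert (by decide), Finset.sum_singleton] at this
    exact this
  have h0 := e 0 (by norm_num) (by norm_num)
  have h1 := e 1 (by norm_num) (by norm_num)
  have h2 := e (-1) (by norm_num) (by norm_num)
  norm_num [LP0, LP1, LP2, LP3, LP4] at h0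
  norm_num [LP0, LP1, LP2, LP3, LP4] at h1
  norm_num [LP0, LP1, LP2, LP3, LP4] at h2
  have hz : g 7 = 0 ∧ g 8 = 0 ∧ g 16 = 0 := by clear e h hf; grind
  intro t ht
  have hm : t ∈ ({7, 8, 16} : Finset (Fin 35)) := by rw [← hf]; simpa using ht
  simp only [Finset.mem_insert, Finset.mem_singleton] at hm
  rcases hm with rfl | rfl | rfl <;> tauto

lemma van20 (g : Fin 35 → ℂ) (h : Van g 20) : ∀ t, wt t = 20 → g t = 0 := by
  have hf : Finset.univ.filter (fun t => wt t = 20) = {12, 13, 14, 20, 21} := by decide +kernel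
  have e : ∀ v : ℝ, -1 ≤ v → v ≤ 1 → g 12 * (LP v 0 * LP v 3 * LP v 3) +
      (g 13 * (LP v 0 * LP v 3 * LP v 4) +
      (g 14 * (LP v 0 * LP v 4 * LP v 4) +
      (g 20 * (LP v 1 * LP v 2 * LP v 3) +
      (g 21 * (LP v 1 * LP v 2 * LP v 4))))) = 0 := by
    intro v a b
    have := h v a b
    rw [hf, Finset.sum_insert (by decide), Finset.sum_insert (by decide), Finset.sum_insert (by decide), Finset.sum_insert (by decide), Finset.sum_singleton] at this
    exact this
  have h0 := e 0 (by norm_num) (by norm_num)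
  have h1 := e 1 (by norm_num) (by norm_num)
  have h2 := e (-1) (by norm_num) (by norm_num)
  have h3 := e (1/2) (by norm_num) (by norm_num)
  have h4 := e (-1/2) (by norm_num) (by norm_num)
  norm_num [LP0, LP1, LP2, LP3, LP4] at h0
  norm_num [LP0, LP1, LP2, LP3, LP4] at h1
  norm_num [LP0, LP1, LP2, LP3, LP4] at h2
  norm_num [LP0, LP1, LP2, LP3, LP4] at h3
  norm_num [LP0, LP1, LP2, LP3, LP4] at h4
  have hz : g 12 = 0 ∧ g 13 = 0 ∧ g 14 = 0 ∧ g 20 = 0 ∧ g 21 = 0 := by clear e h hf; grind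
  intro t ht
  have hm : t ∈ ({12, 13, 14, 20, 21} : Finset (Fin 35)) := by rw [← hf]; simpa using ht
  simp only [Finset.mem_insert, Finset.mem_singleton] at hm
  rcases hm with rfl | rfl | rfl | rfl | rfl <;> tauto

lemma van22 (g : Fin 35 → ℂ) (h : Van g 22) : ∀ t, wt t = 22 → g t = 0 := by
  have hf : Finset.univ.filter (fun t => wt t = 22) = {28, 29, 30} := by decide +kernel
  have e : ∀ v : ℝ, -1 ≤ v → v ≤ 1 → g 28 * (LP v 2 * LP v 3 * LP v 3) +
      (g 29 * (LP v 2 * LP v 3 * LP v 4) +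
      (g 30 * (LP v 2 * LP v 4 * LP v 4))) = 0 := by
    intro v a b
    have := h v a b
    rw [hf, Finset.sum_insert (by decide), Finset.sum_insert (by decide), Finset.sum_singleton] at this
    exact this
  have h0 := e 0 (by norm_num) (by norm_num)
  have h1 := e 1 (by norm_num) (by norm_num)
  have h2 := e (-1) (by norm_num) (by norm_num)
  norm_num [LP0, LP1, LP2, LP3, LP4] at h0
  norm_num [LP0, LP1, LP2, LP3, LP4] at h1
  norm_num [LP0, LP1, LP2, LP3, LP4] at h2
  have hz : g 28 = 0 ∧ g 29 = 0 ∧ g 30 = 0 := by clear e h hf; grind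
  intro t ht
  have hm : t ∈ ({28, 29, 30} : Finset (Fin 35)) := by rw [← hf]; simpa using ht
  simp only [Finset.mem_insert, Finset.mem_singleton] at hm
  rcases hm with rfl | rfl | rfl <;> tauto

lemma van24 (g : Fin 35 → ℂ) (h : Van g 24) : ∀ t, wt t = 24 → g t = 0 := by
  have hf : Finset.univ.filter (fun t => wt t = 24) = {15} := by decide +kernel
  have e : ∀ v : ℝ, -1 ≤ v → v ≤ 1 → g 15 * (LP v 1 * LP v 1 * LP v 1) = 0 := by
    intro v a b
    have := h v a b
    rw [hf, Finset.sum_singleton] at this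
    exact this
  have h0 := e 1 (by norm_num) (by norm_num)
  norm_num [LP0, LP1, LP2, LP3, LP4] at h0
  have hz : g 15 = 0 := by clear e h hf; grind
  intro t ht
  have hm : t ∈ ({15} : Finset (Fin 35)) := by rw [← hf]; simpa using ht
  simp only [Finset.mem_insert, Finset.mem_singleton] at hm
  rcases hm with rfl <;> tauto

lemma van26 (g : Fin 35 → ℂ) (h : Van g 26) : ∀ t, wt t = 26 → g t = 0 := by
  have hf : Finset.univ.filter (fun t => wt t = 26) = {17, 18} := by decide +kernel
  have e : ∀ v : ℝ, -1 ≤ v → v ≤ 1 → g 17 * (LP v 1 * LP v 1 * LP v 3) +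
      (g 18 * (LP v 1 * LP v 1 * LP v 4)) = 0 := by
    intro v a b
    have := h v a b
    rw [hf, Finset.sum_insert (by decide), Finset.sum_singleton] at this
    exact this
  have h0 := e 0 (by norm_num) (by norm_num)
  have h1 := e 1 (by norm_num) (by norm_num)
  have h2 := e (-1) (by norm_num) (by norm_num)
  norm_num [LP0, LP1, LP2, LP3, LP4] at h0
  norm_num [LP0, LP1, LP2, LP3, LP4] at h1
  norm_num [LP0, LP1, LP2, LP3, LP4] at h2
  have hz : g 17 = 0 ∧ g 18 = 0 := by clear e h hf; grind
  intro t ht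
  have hm : t ∈ ({17, 18} : Finset (Fin 35)) := by rw [← hf]; simpa using ht
  simp only [Finset.mem_insert, Finset.mem_singleton] at hm
  rcases hm with rfl | rfl <;> tauto

lemma van28 (g : Fin 35 → ℂ) (h : Van g 28) : ∀ t, wt t = 28 → g t = 0 := by
  have hf : Finset.univ.filter (fun t => wt t = 28) = {22, 23, 24} := by decide +kernel
  have e : ∀ v : ℝ, -1 ≤ v → v ≤ 1 → g 22 * (LP v 1 * LP v 3 * LP v 3) +
      (g 23 * (LP v 1 * LP v 3 * LP v 4) +
      (g 24 * (LP v 1 * LP v 4 * LP v 4))) = 0 := by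
    intro v a b
    have := h v a b
    rw [hf, Finset.sum_insert (by decide), Finset.sum_insert (by decide), Finset.sum_singleton] at this
    exact this
  have h0 := e 0 (by norm_num) (by norm_num)
  have h1 := e 1 (by norm_num) (by norm_num)
  have h2 := e (-1) (by norm_num) (by norm_num)
  norm_num [LP0, LP1, LP2, LP3, LP4] at h0
  norm_num [LP0, LP1, LP2, LP3, LP4] at h1
  norm_num [LP0, LP1, LP2, LP3, LP4] at h2
  have hz : g 22 = 0 ∧ g 23 = 0 ∧ g 24 = 0 := by clear e h hf; grind
  intro t ht
  have hm : t ∈ ({22, 23, 24} : Finset (Fin 35)) := by rw [← hf]; simpa using ht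
  simp only [Finset.mem_insert, Finset.mem_singleton] at hm
  rcases hm with rfl | rfl | rfl <;> tauto

lemma van30 (g : Fin 35 → ℂ) (h : Van g 30) : ∀ t, wt t = 30 → g t = 0 := by
  have hf : Finset.univ.filter (fun t => wt t = 30) = {31, 32, 33, 34} := by decide +kernel
  have e : ∀ v : ℝ, -1 ≤ v → v ≤ 1 → g 31 * (LP v 3 * LP v 3 * LP v 3) +
      (g 32 * (LP v 3 * LP v 3 * LP v 4) +
      (g 33 * (LP v 3 * LP v 4 * LP v 4) +
      (g 34 * (LP v 4 * LP v 4 * LP v 4)))) = 0 := by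
    intro v a b
    have := h v a b
    rw [hf, Finset.sum_insert (by decide), Finset.sum_insert (by decide), Finset.sum_insert (by decide), Finset.sum_singleton] at this
    exact this
  have h0 := e 0 (by norm_num) (by norm_num)
  have h1 := e 1 (by norm_num) (by norm_num)
  have h2 := e (-1) (by norm_num) (by norm_num)
  have h3 := e (1/2) (by norm_num) (by norm_num)
  have h4 := e (-1/2) (by norm_num) (by norm_num)
  norm_num [LP0, LP1, LP2, LP3, LP4] at h0
  norm_num [LP0, LP1, LP2, LP3, LP4] at h1
  norm_num [LP0, LP1, LP2, LP3, LP4] at h2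
  norm_num [LP0, LP1, LP2, LP3, LP4] at h3
  norm_num [LP0, LP1, LP2, LP3, LP4] at h4
  have hz : g 31 = 0 ∧ g 32 = 0 ∧ g 33 = 0 ∧ g 34 = 0 := by clear e h hf; grind
  intro t ht
  have hm : t ∈ ({31, 32, 33, 34} : Finset (Fin 35)) := by rw [← hf]; simpa using ht
  simp only [Finset.mem_insert, Finset.mem_singleton] at hm
  rcases hm with rfl | rfl | rfl | rfl <;> tauto

lemma van_all (g : Fin 35 → ℂ) (N : ℕ) (h : Van g N) : ∀ t, wt t = N → g t = 0 := by
  intro t ht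
  have hall : ∀ t, wt t ∈ ([0, 2, 4, 6, 8, 10, 12, 14, 16, 18, 20, 22, 24, 26, 28, 30] : List ℕ) := by decide +kernel
  have hN := hall t
  rw [ht] at hN
  simp only [List.mem_cons, List.not_mem_nil, or_false] at hN
  rcases hN with rfl | rfl | rfl | rfl | rfl | rfl | rfl | rfl | rfl | rfl | rfl | rfl | rfl | rfl | rfl | rfl
  · exact van0 g h t ht
  · exact van2 g h t ht
  · exact van4 g h t ht
  · exact van6 g h t ht
  · exact van8 g h t ht
  · exact van10 g h t ht
  · exact van12 g h t ht
  · exact van14 g h t ht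
  · exact van16 g h t ht
  · exact van18 g h t ht
  · exact van20 g h t ht
  · exact van22 g h t ht
  · exact van24 g h t ht
  · exact van26 g h t ht
  · exact van28 g h t ht
  · exact van30 g h t ht

lemma mono_indep : LinearIndependent ℂ mono := by
  rw [Fintype.linearIndependent_iff]
  intro g h
  have key : ∀ N t, wt t = N → g t = 0 := by
    intro N
    induction N using Nat.strong_induction_on with
    | _ N ih =>
      exact van_all g N fun v h1 h2 => lead g h N (fun t ht => ih _ ht t rfl) v h1 h2
  exact fun t => key _ t rfl

lemma finrank_Eall : Module.finrank ℂ Eall = 35 := by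
  rw [Eall_eq, V3_eq, finrank_span_eq_card mono_indep, Fintype.card_fin]

/-- the span of the products `θ⁴[δᵢ]θ⁴[δⱼ]θ⁴[δₖ]` with `δᵢ+δⱼ+δₖ` even equals
the span of all such products, has dimension exactly 35, and contains `Ψ₆`. -/
theorem statement14 :
    Submodule.span ℂ
      {g : SiegelH2 → ℂ | ∃ i j k : Fin 10,
        IsEvenChar (addChar (addChar (δev i) (δev j)) (δev k)) ∧
        g = fun τ : SiegelH2 =>
          theta (δev i) τ.1 ^ 4 * theta (δev j) τ.1 ^ 4 * theta (δev k) τ.1 ^ 4}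
      = Submodule.span ℂ
        {g : SiegelH2 → ℂ | ∃ i j k : Fin 10,
          g = fun τ : SiegelH2 =>
            theta (δev i) τ.1 ^ 4 * theta (δev j) τ.1 ^ 4 * theta (δev k) τ.1 ^ 4} ∧
    Module.finrank ℂ ↥(Submodule.span ℂ
      {g : SiegelH2 → ℂ | ∃ i j k : Fin 10,
        g = fun τ : SiegelH2 =>
          theta (δev i) τ.1 ^ 4 * theta (δev j) τ.1 ^ 4 * theta (δev k) τ.1 ^ 4}) = 35 ∧
    (fun τ : SiegelH2 => Ψ6 τ.1) ∈ Submodule.span ℂ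
      {g : SiegelH2 → ℂ | ∃ i j k : Fin 10,
        IsEvenChar (addChar (addChar (δev i) (δev j)) (δev k)) ∧
        g = fun τ : SiegelH2 =>
          theta (δev i) τ.1 ^ 4 * theta (δev j) τ.1 ^ 4 * theta (δev k) τ.1 ^ 4} := by
  exact ⟨Eev_eq, finrank_Eall, Psi_mem⟩

end TwoLoop
end
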